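/- For every quantified Boolean formula Ψ in prenex normal form with quantifier-free part in conjunctive normal form, Ψ is true if and only if L_Ψ is not ST[3/2]-separable from L'_Ψ. -/

import Mathlib

open scoped Computability

/-! Infrastructure: the languages `L_Ψ, L'_Ψ` associated with a quantified Boolean
formula `Ψ = Qₙxₙ⋯Q₁x₁ φ` (prenex normal form, CNF matrix `φ`), following the
reduction of the paper.

* The alphabet `Bₙ` is the type `Letter n`: `pos j`/`neg j` are the letters
  `x_{j+1}`/`x̄_{j+1}` (variables are 0-indexed), `hash j` is `#_{j+1}` and `dollar`
  is `$`; `Bsub n i` is the sub-alphabet `B_i`.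
* A CNF formula `φ` is a list of clauses, a clause being a list of literals
  `(j, b) : Fin n × Bool` (`b = true` for `x_{j+1}`, `b = false` for `¬x_{j+1}`).
* Quantifiers are given by `Q : ℕ → Bool`, `Q i = true` meaning `Q_{i+1} = ∃` and
  `Q i = false` meaning `Q_{i+1} = ∀`.
* `QTruth n Q φ i v` is the truth value of `Ψ_i = Q_i x_i ⋯ Q₁x₁ φ` under the
  assignment of its free variables induced by `v`.
* `LL n Q φ i = (L_i, L'_i)`.
* An `i`-valuation `V` is determined by the assignment `v : Fin n → Bool` it induces
  on the variables `x_j, j > i`: `Val n i v` is the sub-alphabet `V` and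
  `ValLang n i v` is the language `[V]`. -/

/-- The alphabet `Bₙ`. -/
inductive Letter (n : ℕ) where
  | pos (j : Fin n)
  | neg (j : Fin n)
  | hash (j : Fin n)
  | dollar
deriving DecidableEq, Fintype

/-- The sub-alphabet `B_i ⊆ Bₙ` (`B₀ = X ∪ X̄`, and `B_i` adds `#₁, …, #_i, $`). -/
def Bsub (n : ℕ) (i : ℕ) : Set (Letter n) :=
  {l | match l with
    | .pos _ => True
    | .neg _ => True
    | .hash j => (j : ℕ) < i
    | .dollar => 0 < i}

/-- The single-letter language `{a}`. -/
def ltr {n : ℕ} (a : Letter n) : Language (Letter n) := {w | w = [a]}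

/-- The language `S*` for a sub-alphabet `S`. -/
def alphStar {n : ℕ} (S : Set (Letter n)) : Language (Letter n) :=
  {w | ∀ a ∈ w, a ∈ S}

/-- The language `C_j` associated with a clause: `C_j ⊆ B₀` contains `x` (resp. `x̄`)
iff `x` (resp. `¬x`) is a literal of the clause, viewed as a language of
single-letter words. -/
def clauseLang (n : ℕ) (c : List (Fin n × Bool)) : Language (Letter n) :=
  {w | ∃ p ∈ c, w = [if p.2 then Letter.pos p.1 else Letter.neg p.1]}

/-- Truth of `Ψ_i = Q_i x_i ⋯ Q₁ x₁ φ` under the assignment `v` of its free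
variables. -/
def QTruth (n : ℕ) (Q : ℕ → Bool) (φ : List (List (Fin n × Bool))) :
    ℕ → (Fin n → Bool) → Prop
  | 0, v => ∀ c ∈ φ, ∃ p ∈ c, v p.1 = p.2
  | i + 1, v =>
      if h : i < n then
        (if Q i then ∃ b : Bool, QTruth n Q φ i (Function.update v ⟨i, h⟩ b)
        else ∀ b : Bool, QTruth n Q φ i (Function.update v ⟨i, h⟩ b))
      else True

/-- The pair of languages `(L_i, L'_i)` of the reduction. -/
def LL (n : ℕ) (Q : ℕ → Bool) (φ : List (List (Fin n × Bool))) :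
    ℕ → Language (Letter n) × Language (Letter n)
  | 0 => (alphStar (Bsub n 0), (φ.map (clauseLang n)).prod)
  | i + 1 =>
      if h : i < n then
        let j : Fin n := ⟨i, h⟩
        -- `(x_{i+1} + x̄_{i+1})`
        let X2 : Language (Letter n) := {w | w = [Letter.pos j] ∨ w = [Letter.neg j]}
        let hashL := ltr (Letter.hash j)
        let dolL := ltr (Letter.dollar : Letter n)
        -- `T_{i+1} = (#_{i+1} x_{i+1} (B_i ∖ {x̄_{i+1}})* $ x_{i+1})*`
        let Ti : Language (Letter n) :=
          (hashL * ltr (Letter.pos j) *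
            alphStar {a | a ∈ Bsub n i ∧ a ≠ Letter.neg j} * dolL *
            ltr (Letter.pos j))∗
        -- `T̄_{i+1} = (#_{i+1} x̄_{i+1} (B_i ∖ {x_{i+1}})* $ x̄_{i+1})*`
        let Tbar : Language (Letter n) :=
          (hashL * ltr (Letter.neg j) *
            alphStar {a | a ∈ Bsub n i ∧ a ≠ Letter.pos j} * dolL *
            ltr (Letter.neg j))∗
        -- `L_{i+1} = (#(x+x̄)L_i$(x+x̄))* #`
        let Li : Language (Letter n) :=
          (hashL * X2 * (LL n Q φ i).1 * dolL * X2)∗ * hashL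
        -- `L'_{i+1}`, depending on the quantifier `Q_{i+1}`
        let Li' : Language (Letter n) :=
          if Q i then
            (hashL * X2 * (LL n Q φ i).2 * dolL * X2)∗ * hashL * dolL *
              (Ti * hashL + Tbar * hashL)
          else
            Tbar * hashL * dolL *
              (hashL * X2 * (LL n Q φ i).2 * dolL * X2)∗ * hashL * dolL *
              Ti * hashL
        (Li, Li')
      else (⊥, ⊥)

/-- The sub-alphabet `V ⊆ B_i` given by the `i`-valuation inducing the truth
assignment `v` on the variables `x_j, j > i`. -/
def Val (n : ℕ) (i : ℕ) (v : Fin n → Bool) : Set (Letter n) :=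
  {l | match l with
    | .pos j => (j : ℕ) < i ∨ v j = true
    | .neg j => (j : ℕ) < i ∨ v j = false
    | .hash j => (j : ℕ) < i
    | .dollar => 0 < i}

/-- The language `[V] ⊆ V*` of the words containing, for every `j > i`, at least one
of the letters `x_j, x̄_j`. -/
def ValLang (n : ℕ) (i : ℕ) (v : Fin n → Bool) : Language (Letter n) :=
  {w | (∀ a ∈ w, a ∈ Val n i v) ∧
    ∀ j : Fin n, i ≤ (j : ℕ) → (Letter.pos j ∈ w ∨ Letter.neg j ∈ w)}

/-- A class of languages: to every alphabet it associates a set of languages. -/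
abbrev LangClass : Type 1 := ∀ A : Type, Set (Language A)

/-- Boolean closure: the least set of languages containing `S` and closed under
Boolean operations (union, intersection, complement). -/
inductive BoolClosure {A : Type} (S : Set (Language A)) : Language A → Prop
  | base {L : Language A} : L ∈ S → BoolClosure S L
  | compl {L : Language A} : BoolClosure S L → BoolClosure S Lᶜ
  | union {K L : Language A} : BoolClosure S K → BoolClosure S L → BoolClosure S (K ⊔ L)
  | inter {K L : Language A} : BoolClosure S K → BoolClosure S L → BoolClosure S (K ⊓ L)

/-- Polynomial closure: the least set of languages containing `S` and closed under
finite union and marked concatenation `K a L`. -/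
inductive PolClosure {A : Type} (S : Set (Language A)) : Language A → Prop
  | base {L : Language A} : L ∈ S → PolClosure S L
  | union {K L : Language A} : PolClosure S K → PolClosure S L → PolClosure S (K ⊔ L)
  | marked {K L : Language A} (a : A) :
      PolClosure S K → PolClosure S L → PolClosure S (K * {[a]} * L)

/-- Level `k/2` of the concatenation hierarchy of basis `C` (levels are counted in
half units: index `k` is level `k/2`, so `C[0] = C`, `C[n + 1/2] = Pol(C[n])` and
`C[n + 1] = Bool(C[n + 1/2])`). -/
def hlevel (C : LangClass) : ℕ → LangClass
  | 0 => C
  | k + 1 => fun A =>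
      if k % 2 = 0 then {L | PolClosure (hlevel C k A) L}
      else {L | BoolClosure (hlevel C k A) L}

/-- The basis of the Straubing-Thérien hierarchy: `ST[0](A) = {∅, A*}`. -/
def STbasis : LangClass := fun A => {(⊥ : Language A), (⊤ : Language A)}

/-- `L₁` is `𝒞`-separable from `L₂`: some `K ∈ 𝒞` includes `L₁` and is disjoint
from `L₂`. -/
def Separable {A : Type} (𝒞 : Set (Language A)) (L₁ L₂ : Language A) : Prop :=
  ∃ K ∈ 𝒞, L₁ ≤ K ∧ L₂ ⊓ K = ⊥

/-! ### The class `PP` of finite unions of monomials -/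

/-- Polynomials over the languages `B*`. -/
def PP {n : ℕ} (L : Language (Letter n)) : Prop :=
  PolClosure {L | L = ⊥ ∨ ∃ B, L = alphStar B} L

theorem mem_alphStar {n : ℕ} {S : Set (Letter n)} {w : List (Letter n)} :
    w ∈ alphStar S ↔ ∀ a ∈ w, a ∈ S := Iff.rfl

theorem mem_ltr {n : ℕ} {a : Letter n} {w : List (Letter n)} :
    w ∈ ltr a ↔ w = [a] := Iff.rfl

theorem ltr_eq {n : ℕ} (a : Letter n) : ({[a]} : Language (Letter n)) = ltr a := rfl

theorem mem_marked {n : ℕ} {K L : Language (Letter n)} {a : Letter n} {w : List (Letter n)} :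
    w ∈ K * {[a]} * L ↔ ∃ u v, u ∈ K ∧ v ∈ L ∧ w = u ++ a :: v := by
  rw [ltr_eq]
  simp only [Language.mem_mul, mem_ltr]
  constructor
  · rintro ⟨_, ⟨u, hu, _, rfl, rfl⟩, v, hv, rfl⟩
    exact ⟨u, v, hu, hv, by simp⟩
  · rintro ⟨u, v, hu, hv, rfl⟩
    exact ⟨u ++ [a], ⟨u, hu, _, rfl, rfl⟩, v, hv, by simp⟩

theorem mem_sup' {n : ℕ} {K L : Language (Letter n)} {w : List (Letter n)} :
    w ∈ K ⊔ L ↔ w ∈ K ∨ w ∈ L := Iff.rfl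

theorem mem_inf' {n : ℕ} {K L : Language (Letter n)} {w : List (Letter n)} :
    w ∈ K ⊓ L ↔ w ∈ K ∧ w ∈ L := Iff.rfl

theorem mem_compl' {n : ℕ} {K : Language (Letter n)} {w : List (Letter n)} :
    w ∈ Kᶜ ↔ w ∉ K := Iff.rfl

theorem not_mem_bot' {n : ℕ} {w : List (Letter n)} :
    w ∉ (⊥ : Language (Letter n)) := fun h => h

theorem mem_top' {n : ℕ} {w : List (Letter n)} :
    w ∈ (⊤ : Language (Letter n)) := trivial

/-- The language of a predicate. -/
def mkL {n : ℕ} (p : List (Letter n) → Prop) : Language (Letter n) := {w | p w}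

theorem mem_mkL {n : ℕ} {p : List (Letter n) → Prop} {w : List (Letter n)} :
    w ∈ mkL p ↔ p w := Iff.rfl

theorem hlevel_three {n : ℕ} : hlevel STbasis 3 (Letter n) =
    {L | PolClosure {L | BoolClosure {L | PolClosure {(⊥ : Language (Letter n)), ⊤} L} L} L} := by
  simp [hlevel, STbasis]

theorem PP.bot {n : ℕ} : PP (⊥ : Language (Letter n)) := PolClosure.base (Or.inl rfl)

theorem PP.star {n : ℕ} (B : Set (Letter n)) : PP (alphStar B) :=
  PolClosure.base (Or.inr ⟨B, rfl⟩)

theorem PP.sup {n : ℕ} {K L : Language (Letter n)} (hK : PP K) (hL : PP L) : PP (K ⊔ L) :=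
  PolClosure.union hK hL

theorem PP.marked {n : ℕ} {K L : Language (Letter n)} (a : Letter n) (hK : PP K) (hL : PP L) :
    PP (K * {[a]} * L) :=
  PolClosure.marked a hK hL

theorem alphStar_bool {n : ℕ} (B : Set (Letter n)) :
    BoolClosure {L | PolClosure {(⊥ : Language (Letter n)), ⊤} L} (alphStar B) := by
  classical
  have key : ∀ F : Finset (Letter n),
      BoolClosure {L | PolClosure {(⊥ : Language (Letter n)), ⊤} L}
        (alphStar {a | a ∉ F}) := by
    intro F
    induction F using Finset.induction_on with
    | empty =>
      have : (alphStar {a | a ∉ (∅ : Finset (Letter n))} : Language (Letter n)) = ⊤ := by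
        ext w
        simp [mem_alphStar, mem_top']
      rw [this]
      exact BoolClosure.base (PolClosure.base (by simp))
    | insert b F hb ih =>
      have : (alphStar {a | a ∉ insert b F} : Language (Letter n)) =
          (⊤ * {[b]} * ⊤)ᶜ ⊓ alphStar {a | a ∉ F} := by
        ext w
        rw [mem_inf', mem_compl', mem_marked, mem_alphStar, mem_alphStar]
        constructor
        · intro h
          refine ⟨?_, fun a ha => ?_⟩
          · rintro ⟨u, v, -, -, rfl⟩
            have := h b (by simp)
            simp at this
          · have := h a ha
            simp at this
            exact this.2
        · rintro ⟨h1, h2⟩ a ha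
          have := h2 a ha
          simp only [Set.mem_ofPred_eq, Finset.mem_insert, not_or] at this ⊢
          refine ⟨?_, this⟩
          rintro rfl
          obtain ⟨u, v, rfl⟩ := List.append_of_mem ha
          exact h1 ⟨u, v, mem_top', mem_top', rfl⟩
      rw [this]
      refine BoolClosure.inter (BoolClosure.compl (BoolClosure.base ?_)) ih
      exact PolClosure.marked b (PolClosure.base (by simp)) (PolClosure.base (by simp))
  have := key (Finset.univ.filter (fun a => a ∉ B))
  simpa using this

theorem PP.hlevel {n : ℕ} {L : Language (Letter n)} (h : PP L) :
    L ∈ hlevel STbasis 3 (Letter n) := by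
  rw [hlevel_three]
  change PolClosure _ L
  induction h with
  | base h =>
    refine PolClosure.base ?_
    rcases h with rfl | ⟨B, rfl⟩
    · exact BoolClosure.base (PolClosure.base (by simp))
    · exact alphStar_bool B
  | union _ _ h1 h2 => exact PolClosure.union h1 h2
  | marked a _ _ h1 h2 => exact PolClosure.marked a h1 h2

/-- Monomials. -/
inductive Mono {n : ℕ} : Language (Letter n) → Prop
  | star (B : Set (Letter n)) : Mono (alphStar B)
  | cons (B : Set (Letter n)) (a : Letter n) {M : Language (Letter n)} :
      Mono M → Mono (alphStar B * {[a]} * M)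

theorem Mono.marked {n : ℕ} {K L : Language (Letter n)} (a : Letter n) (hK : Mono K)
    (hL : Mono L) : Mono (K * {[a]} * L) := by
  induction hK with
  | star B => exact Mono.cons B a hL
  | cons B b _ ih =>
    have := Mono.cons B b ih
    simpa only [mul_assoc] using this

theorem PP.monos {n : ℕ} {L : Language (Letter n)} (h : PP L) :
    ∃ l : List (Language (Letter n)), (∀ M ∈ l, Mono M) ∧ ∀ w, w ∈ L ↔ ∃ M ∈ l, w ∈ M := by
  induction h with
  | base h =>
    rcases h with rfl | ⟨B, rfl⟩
    · exact ⟨[], by simp, by simp [not_mem_bot']⟩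
    · exact ⟨[alphStar B], by simpa using Mono.star B, by simp⟩
  | union _ _ h1 h2 =>
    obtain ⟨l1, h1, h1'⟩ := h1
    obtain ⟨l2, h2, h2'⟩ := h2
    refine ⟨l1 ++ l2, ?_, ?_⟩
    · intro M hM
      rcases List.mem_append.1 hM with h | h
      · exact h1 M h
      · exact h2 M h
    · intro w
      rw [mem_sup', h1', h2']
      simp only [List.mem_append, or_and_right, exists_or]
  | marked a _ _ h1 h2 =>
    obtain ⟨l1, h1, h1'⟩ := h1
    obtain ⟨l2, h2, h2'⟩ := h2
    refine ⟨l1.flatMap fun M => l2.map fun N => M * {[a]} * N, ?_, ?_⟩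
    · intro M hM
      simp only [List.mem_flatMap, List.mem_map] at hM
      obtain ⟨M1, hM1, M2, hM2, rfl⟩ := hM
      exact Mono.marked a (h1 _ hM1) (h2 _ hM2)
    · intro w
      rw [mem_marked]
      constructor
      · rintro ⟨u, v, hu, hv, rfl⟩
        obtain ⟨M1, hM1, hu⟩ := (h1' _).1 hu
        obtain ⟨M2, hM2, hv⟩ := (h2' _).1 hv
        refine ⟨M1 * {[a]} * M2, ?_, mem_marked.2 ⟨u, v, hu, hv, rfl⟩⟩
        simp only [List.mem_flatMap, List.mem_map]
        exact ⟨M1, hM1, M2, hM2, rfl⟩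
      · rintro ⟨M, hM, hw⟩
        simp only [List.mem_flatMap, List.mem_map] at hM
        obtain ⟨M1, hM1, M2, hM2, rfl⟩ := hM
        obtain ⟨u, v, hu, hv, rfl⟩ := mem_marked.1 hw
        exact ⟨u, v, (h1' _).2 ⟨_, hM1, hu⟩, (h2' _).2 ⟨_, hM2, hv⟩, rfl⟩

theorem PP.of_list {n : ℕ} (l : List (Language (Letter n))) (h : ∀ M ∈ l, PP M) :
    ∀ L : Language (Letter n), (∀ w, w ∈ L ↔ ∃ M ∈ l, w ∈ M) → PP L := by
  induction l with
  | nil =>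
    intro L hL
    have : L = ⊥ := by
      ext w
      simp [hL, not_mem_bot']
    rw [this]
    exact PP.bot
  | cons M l ih =>
    intro L hL
    have h2 : L = M ⊔ mkL (fun w => ∃ M ∈ l, w ∈ M) := by
      ext w
      rw [hL, mem_sup', mem_mkL]
      simp
    rw [h2]
    exact PP.sup (h M (by simp)) (ih (fun N hN => h N (by simp [hN])) _ (fun w => Iff.rfl))

theorem star_inter_mono {n : ℕ} (B : Set (Letter n)) {M : Language (Letter n)} (hM : Mono M) :
    PP (alphStar B ⊓ M) := by
  induction hM with
  | star C =>
    have : alphStar B ⊓ alphStar C = alphStar (B ∩ C) := by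
      ext w
      simp only [mem_inf', mem_alphStar, Set.mem_inter_iff]
      exact ⟨fun h a ha => ⟨h.1 a ha, h.2 a ha⟩,
        fun h => ⟨fun a ha => (h a ha).1, fun a ha => (h a ha).2⟩⟩
    rw [this]
    exact PP.star _
  | @cons C c N _ ih =>
    by_cases hc : c ∈ B
    · have : alphStar B ⊓ (alphStar C * {[c]} * N) =
          alphStar (B ∩ C) * {[c]} * (alphStar B ⊓ N) := by
        ext w
        rw [mem_inf', mem_marked, mem_marked]
        constructor
        · rintro ⟨h, u, v, hu, hv, rfl⟩
          refine ⟨u, v, fun a ha => ⟨h a (by simp [ha]), hu a ha⟩,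
            ⟨fun a ha => h a (by simp [ha]), hv⟩, rfl⟩
        · rintro ⟨u, v, hu, hv, rfl⟩
          refine ⟨?_, u, v, fun a ha => (hu a ha).2, hv.2, rfl⟩
          intro a ha
          rcases List.mem_append.1 ha with h | h
          · exact (hu a h).1
          · rcases List.mem_cons.1 h with rfl | h
            · exact hc
            · exact hv.1 a h
      rw [this]
      exact PP.marked _ (PP.star _) ih
    · have : alphStar B ⊓ (alphStar C * {[c]} * N) = ⊥ := by
        ext w
        rw [mem_inf', mem_marked]
        constructor
        · rintro ⟨h, u, v, hu, hv, rfl⟩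
          exact absurd (h c (by simp)) hc
        · exact fun h => absurd h not_mem_bot'
      rw [this]
      exact PP.bot

theorem PP.restrict {n : ℕ} {L : Language (Letter n)} (p : Prop) (h : PP L) :
    PP (mkL fun w => p ∧ w ∈ L) := by
  by_cases hp : p
  · have : (mkL fun w => p ∧ w ∈ L) = L := by
      ext w
      exact ⟨fun h => h.2, fun h => ⟨hp, h⟩⟩
    rwa [this]
  · have : (mkL fun w => p ∧ w ∈ L) = ⊥ := by
      ext w
      exact ⟨fun h => absurd h.1 hp, fun h => absurd h not_mem_bot'⟩
    rw [this]
    exact PP.bot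

theorem mono_inter_mono {n : ℕ} {M : Language (Letter n)} (hM : Mono M) :
    ∀ {N : Language (Letter n)}, Mono N → PP (M ⊓ N) := by
  induction hM with
  | star B => exact fun hN => star_inter_mono B hN
  | @cons B b M hM ihM =>
    intro N hN
    induction hN with
    | star C =>
      rw [inf_comm]
      exact star_inter_mono C (Mono.cons B b hM)
    | @cons C c N hN ihN =>
      have h1 := (PP.marked b (PP.star (B ∩ C)) (ihM hN)).restrict (b = c)
      have h2 := (PP.marked b (PP.star (B ∩ C)) (ihM (Mono.cons C c hN))).restrict (b ∈ C)
      have h3 := (PP.marked c (PP.star (B ∩ C)) ihN).restrict (c ∈ B)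
      have := (h1.sup h2).sup h3
      convert this using 1
      ext w
      rw [mem_inf', mem_sup', mem_sup']
      constructor
      · rintro ⟨hw1, hw2⟩
        obtain ⟨u, v, hu, hv, rfl⟩ := mem_marked.1 hw1
        obtain ⟨u', v', hu', hv', h⟩ := mem_marked.1 hw2
        rcases List.append_eq_append_iff.1 h with ⟨z, hz1, hz2⟩ | ⟨z, hz1, hz2⟩
        · cases z with
          | nil =>
            simp at hz1 hz2
            obtain ⟨rfl, rfl⟩ := hz2
            subst hz1
            exact Or.inl (Or.inl ⟨rfl, mem_marked.2
              ⟨_, _, fun a ha => ⟨hu a ha, hu' a ha⟩, ⟨hv, hv'⟩, rfl⟩⟩)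
          | cons d z =>
            simp at hz2
            obtain ⟨rfl, rfl⟩ := hz2
            subst hz1
            refine Or.inl (Or.inr ⟨hu' b (by simp), mem_marked.2
              ⟨_, _, fun a ha => ⟨hu a ha, hu' a (by simp [ha])⟩, ⟨hv, ?_⟩, rfl⟩⟩)
            exact mem_marked.2 ⟨_, _, fun a ha => hu' a (by simp [ha]), hv', rfl⟩
        · cases z with
          | nil =>
            simp at hz1 hz2
            obtain ⟨rfl, rfl⟩ := hz2
            subst hz1
            exact Or.inl (Or.inl ⟨rfl, mem_marked.2
              ⟨_, _, fun a ha => ⟨hu a ha, hu' a ha⟩, ⟨hv, hv'⟩, rfl⟩⟩)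
          | cons d z =>
            simp at hz2
            obtain ⟨rfl, rfl⟩ := hz2
            subst hz1
            refine Or.inr ⟨hu c (by simp), mem_marked.2
              ⟨_, _, fun a ha => ⟨hu a (by simp [ha]), hu' a ha⟩, ⟨?_, hv'⟩, by simp⟩⟩
            exact mem_marked.2 ⟨_, _, fun a ha => hu a (by simp [ha]), hv, rfl⟩
      · rintro ((⟨rfl, hw⟩ | ⟨hc, hw⟩) | ⟨hc, hw⟩)
        · obtain ⟨u, v, hu, hv, rfl⟩ := mem_marked.1 hw
          exact ⟨mem_marked.2 ⟨_, _, fun a ha => (hu a ha).1, hv.1, rfl⟩,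
            mem_marked.2 ⟨_, _, fun a ha => (hu a ha).2, hv.2, rfl⟩⟩
        · obtain ⟨u, v, hu, hv, rfl⟩ := mem_marked.1 hw
          refine ⟨mem_marked.2 ⟨_, _, fun a ha => (hu a ha).1, hv.1, rfl⟩, ?_⟩
          obtain ⟨u', v', hu', hv', rfl⟩ := mem_marked.1 hv.2
          refine mem_marked.2 ⟨u ++ b :: u', _, ?_, hv', by simp⟩
          intro a ha
          rcases List.mem_append.1 ha with h | h
          · exact (hu a h).2
          · rcases List.mem_cons.1 h with rfl | h
            · exact hc
            · exact hu' a h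
        · obtain ⟨u, v, hu, hv, rfl⟩ := mem_marked.1 hw
          refine ⟨?_, mem_marked.2 ⟨_, _, fun a ha => (hu a ha).2, hv.2, rfl⟩⟩
          obtain ⟨u', v', hu', hv', rfl⟩ := mem_marked.1 hv.1
          refine mem_marked.2 ⟨u ++ c :: u', _, ?_, hv', by simp⟩
          intro a ha
          rcases List.mem_append.1 ha with h | h
          · exact (hu a h).1
          · rcases List.mem_cons.1 h with rfl | h
            · exact hc
            · exact hu' a h

theorem PP.inf {n : ℕ} {K L : Language (Letter n)} (hK : PP K) (hL : PP L) : PP (K ⊓ L) := by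
  obtain ⟨l1, h1, h1'⟩ := hK.monos
  obtain ⟨l2, h2, h2'⟩ := hL.monos
  refine PP.of_list (l1.flatMap fun M => l2.map fun N => M ⊓ N) ?_ _ ?_
  · intro M hM
    simp only [List.mem_flatMap, List.mem_map] at hM
    obtain ⟨M1, hM1, M2, hM2, rfl⟩ := hM
    exact mono_inter_mono (h1 _ hM1) (h2 _ hM2)
  · intro w
    rw [mem_inf', h1', h2']
    simp only [List.mem_flatMap, List.mem_map]
    constructor
    · rintro ⟨⟨M, hM, hw⟩, N, hN, hw'⟩
      exact ⟨M ⊓ N, ⟨M, hM, N, hN, rfl⟩, hw, hw'⟩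
    · rintro ⟨_, ⟨M, hM, N, hN, rfl⟩, hw, hwN⟩
      exact ⟨⟨M, hM, hw⟩, N, hN, hwN⟩

/-- Mirror image. -/
def mir {n : ℕ} (L : Language (Letter n)) : Language (Letter n) := {w | w.reverse ∈ L}

theorem mem_mir {n : ℕ} {L : Language (Letter n)} {w : List (Letter n)} :
    w ∈ mir L ↔ w.reverse ∈ L := Iff.rfl

theorem PP.mir {n : ℕ} {L : Language (Letter n)} (h : PP L) : PP (mir L) := by
  induction h with
  | base h =>
    rcases h with rfl | ⟨B, rfl⟩
    · exact PP.bot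
    · convert PP.star B using 1
      ext w
      simp [mem_mir, mem_alphStar]
  | union _ _ h1 h2 => exact PP.sup h1 h2
  | marked a _ _ h1 h2 =>
    convert PP.marked a h2 h1 using 1
    ext w
    rw [mem_mir, mem_marked, mem_marked]
    constructor
    · rintro ⟨u, v, hu, hv, h⟩
      refine ⟨v.reverse, u.reverse, by simpa [mem_mir], by simpa [mem_mir], ?_⟩
      have := congrArg List.reverse h
      simpa using this
    · rintro ⟨u, v, hu, hv, rfl⟩
      exact ⟨v.reverse, u.reverse, hv, hu, by simp⟩

/-! ### Chains -/

/-- The language `(H M)* H`. -/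
inductive Chn {n : ℕ} (H : Letter n) (M : Language (Letter n)) : List (Letter n) → Prop
  | base : Chn H M [H]
  | step {m w : List (Letter n)} : m ∈ M → Chn H M w → Chn H M (H :: (m ++ w))

theorem mem_chn {n : ℕ} {H : Letter n} {M : Language (Letter n)} {w : List (Letter n)} :
    w ∈ (ltr H * M)∗ * ltr H ↔ Chn H M w := by
  constructor
  · rw [Language.mem_mul]
    rintro ⟨u, hu, v, hv, rfl⟩
    rw [mem_ltr] at hv
    subst hv
    rw [Language.mem_kstar] at hu
    obtain ⟨S, rfl, hS⟩ := hu
    induction S with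
    | nil => exact Chn.base
    | cons x S ih =>
      have hx := hS x (by simp)
      obtain ⟨h, hh, m, hm, rfl⟩ := Language.mem_mul.1 hx
      rw [mem_ltr] at hh
      subst hh
      have := Chn.step hm (ih (fun y hy => hS y (by simp [hy])))
      simpa using this
  · intro h
    rw [Language.mem_mul]
    have : ∃ S : List (List (Letter n)), w = S.flatten ++ [H] ∧ ∀ y ∈ S, y ∈ ltr H * M := by
      induction h with
      | base => exact ⟨[], by simp, by simp⟩
      | @step m w hm _ ih =>
        obtain ⟨S, rfl, hS⟩ := ih
        refine ⟨(H :: m) :: S, by simp, ?_⟩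
        intro y hy
        rcases List.mem_cons.1 hy with rfl | hy
        · exact Language.mem_mul.2 ⟨[H], rfl, m, hm, rfl⟩
        · exact hS y hy
    obtain ⟨S, rfl, hS⟩ := this
    exact ⟨S.flatten, Language.mem_kstar.2 ⟨S, rfl, hS⟩, [H], rfl, rfl⟩

theorem Chn.snoc {n : ℕ} {H : Letter n} {M : Language (Letter n)} {w m : List (Letter n)}
    (h : Chn H M w) (hm : m ∈ M) : Chn H M (w ++ (m ++ [H])) := by
  induction h with
  | base => exact (Chn.step hm Chn.base : Chn H M (H :: (m ++ [H])))
  | step hm' _ ih =>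
    have := Chn.step hm' ih
    simpa using this

theorem Chn.mir {n : ℕ} {H : Letter n} {M : Language (Letter n)} {w : List (Letter n)}
    (h : Chn H M w) : Chn H (mir M) w.reverse := by
  induction h with
  | base => exact Chn.base
  | @step m w hm _ ih =>
    have := Chn.snoc ih (m := m.reverse) (by simpa [mem_mir] using hm)
    simpa using this

theorem Chn.head {n : ℕ} {H : Letter n} {M : Language (Letter n)} {w : List (Letter n)}
    (h : Chn H M w) : ∃ r, w = H :: r := by
  cases h with
  | base => exact ⟨_, rfl⟩
  | step _ _ => exact ⟨_, rfl⟩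

/-! ### The separator looking at the first block after the last `q` -/

/-- The suffixes that are accepted after the last block with a `q`. -/
def Suf {n : ℕ} (W : Set (Letter n)) (q H : Letter n) (K : Language (Letter n))
    (s : List (Letter n)) : Prop :=
  s = [H] ∨ ∃ k r, k ∈ K ∧ (∀ a ∈ r, a ∈ W ∧ a ≠ q) ∧ s = H :: (k ++ H :: r)

/-- The separator. -/
def KL {n : ℕ} (W : Set (Letter n)) (q H : Letter n) (K : Language (Letter n))
    (w : List (Letter n)) : Prop :=
  Suf W q H K w ∨ ∃ y z s, (∀ a ∈ y, a ∈ W) ∧ (∀ a ∈ z, a ∈ W ∧ a ≠ q ∧ a ≠ H) ∧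
    Suf W q H K s ∧ w = y ++ q :: (z ++ s)

theorem PP_Suf {n : ℕ} (W : Set (Letter n)) (q H : Letter n) {K : Language (Letter n)}
    (hK : PP K) (Z : Set (Letter n)) :
    PP (mkL fun w => ∃ z s, (∀ a ∈ z, a ∈ Z) ∧ Suf W q H K s ∧ w = z ++ s) := by
  have h1 := PP.marked H (PP.star Z) (PP.star (∅ : Set (Letter n)))
  have h2 := PP.marked H (PP.marked H (PP.star Z) hK) (PP.star {a | a ∈ W ∧ a ≠ q})
  convert h1.sup h2 using 1
  ext w
  rw [mem_mkL, mem_sup', mem_marked, mem_marked]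
  constructor
  · rintro ⟨z, s, hz, rfl | ⟨k, r, hk, hr, rfl⟩, rfl⟩
    · exact Or.inl ⟨z, [], hz, by simp [mem_alphStar], rfl⟩
    · refine Or.inr ⟨z ++ H :: k, r, mem_marked.2 ⟨z, k, hz, hk, rfl⟩, hr, by simp⟩
  · rintro (⟨z, e, hz, he, rfl⟩ | ⟨u, r, hu, hr, rfl⟩)
    · have : e = [] := by
        rcases e with _ | ⟨a, e⟩
        · rfl
        · exact absurd (he a (by simp)) (by simp)
      subst this
      exact ⟨z, [H], hz, Or.inl rfl, rfl⟩
    · obtain ⟨z, k, hz, hk, rfl⟩ := mem_marked.1 hu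
      exact ⟨z, _, hz, Or.inr ⟨k, r, hk, hr, rfl⟩, by simp⟩

theorem PP_KL {n : ℕ} (W : Set (Letter n)) (q H : Letter n) {K : Language (Letter n)}
    (hK : PP K) : PP (mkL (KL W q H K)) := by
  have h1 := PP_Suf W q H hK ∅
  have h2 := PP.marked q (PP.star W) (PP_Suf W q H hK {a | a ∈ W ∧ a ≠ q ∧ a ≠ H})
  convert h1.sup h2 using 1
  ext w
  rw [mem_mkL, mem_sup', mem_marked, mem_mkL]
  constructor
  · rintro (h | ⟨y, z, s, hy, hz, hs, rfl⟩)
    · exact Or.inl ⟨[], w, by simp, h, rfl⟩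
    · exact Or.inr ⟨y, z ++ s, hy, ⟨z, s, hz, hs, rfl⟩, rfl⟩
  · rintro (⟨z, s, hz, hs, rfl⟩ | ⟨y, v, hy, ⟨z, s, hz, hs, rfl⟩, rfl⟩)
    · have : z = [] := by
        rcases z with _ | ⟨a, e⟩
        · rfl
        · exact absurd (hz a (by simp)) (by simp)
      subst this
      exact Or.inl hs
    · exact Or.inr ⟨y, z, s, hy, hz, hs, rfl⟩

section last

variable {n : ℕ} {W : Set (Letter n)} {q H D : Letter n} {K : Language (Letter n)}

theorem Suf.head {s : List (Letter n)} (h : Suf W q H K s) : ∃ r, s = H :: r := by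
  rcases h with rfl | ⟨k, r, _, _, rfl⟩
  · exact ⟨_, rfl⟩
  · exact ⟨_, rfl⟩

theorem Suf.mem (hHq : H ≠ q) (hH : H ∈ W) (hK : ∀ k ∈ K, ∀ a ∈ k, a ∈ W ∧ a ≠ q ∧ a ≠ H)
    {s : List (Letter n)} (h : Suf W q H K s) : ∀ a ∈ s, a ∈ W ∧ a ≠ q := by
  intro a ha
  rcases h with rfl | ⟨k, r, hk, hr, rfl⟩
  · simp at ha
    subst ha
    exact ⟨hH, hHq⟩
  · simp at ha
    rcases ha with rfl | ha | rfl | ha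
    · exact ⟨hH, hHq⟩
    · exact ⟨(hK k hk a ha).1, (hK k hk a ha).2.1⟩
    · exact ⟨hH, hHq⟩
    · exact hr a ha

theorem KL.mem (hHq : H ≠ q) (hH : H ∈ W) (hq : q ∈ W)
    (hK : ∀ k ∈ K, ∀ a ∈ k, a ∈ W ∧ a ≠ q ∧ a ≠ H)
    {s : List (Letter n)} (h : KL W q H K s) : ∀ a ∈ s, a ∈ W := by
  rcases h with h | ⟨y, z, s, hy, hz, hs, rfl⟩
  · exact fun a ha => (h.mem hHq hH hK a ha).1
  · intro a ha
    simp at ha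
    rcases ha with ha | rfl | ha | ha
    · exact hy a ha
    · exact hq
    · exact (hz a ha).1
    · exact (hs.mem hHq hH hK a ha).1

/-- the last occurrence -/
theorem last_occ {q : Letter n} : ∀ {w : List (Letter n)}, q ∈ w →
    ∃ y z, w = y ++ q :: z ∧ q ∉ z := by
  intro w hw
  have := List.append_of_mem (List.mem_reverse.2 hw)
  obtain ⟨s, t, h, h2⟩ := List.eq_append_cons_of_mem (List.mem_reverse.2 hw)
  refine ⟨t.reverse, s.reverse, ?_, by simpa using h2⟩
  have := congrArg List.reverse h
  simpa using this

theorem KL.contains (hHq : H ≠ q) (hH : H ∈ W)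
    (hK : ∀ k ∈ K, ∀ a ∈ k, a ∈ W ∧ a ≠ q ∧ a ≠ H)
    {M : Language (Letter n)} (hM : ∀ m ∈ M, H ∉ m)
    (hMK : ∀ m ∈ M, (∀ a ∈ m, a ∈ W) → q ∉ m → m ∈ K)
    {w : List (Letter n)} (h : Chn H M w) (hw : ∀ a ∈ w, a ∈ W) : KL W q H K w := by
  induction h with
  | base => exact Or.inl (Or.inl rfl)
  | @step m w hm hc ih =>
    have ih := ih (fun a ha => hw a (by simp [ha]))
    rcases ih with h | ⟨y, z, s, hy, hz, hs, rfl⟩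
    · by_cases hq : q ∈ m
      · obtain ⟨y, z, rfl, hqz⟩ := last_occ hq
        refine Or.inr ⟨H :: y, z, w, fun a ha => hw a ?_, fun a ha => ⟨hw a (by simp [ha]), ?_, ?_⟩,
          h, by simp⟩
        · simp at ha ⊢
          tauto
        · rintro rfl
          exact hqz ha
        · rintro rfl
          exact hM _ hm (by simp [ha])
      · obtain ⟨r, rfl⟩ := h.head
        refine Or.inl (Or.inr ⟨m, r, hMK m hm (fun a ha => hw a (by simp [ha])) hq,
          fun a ha => h.mem hHq hH hK a (by simp [ha]), rfl⟩)
    · refine Or.inr ⟨H :: (m ++ y), z, s, fun a ha => hw a ?_, hz, hs, by simp⟩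
      simp at ha ⊢
      tauto

theorem free_unique {H : Letter n} {z m r r' : List (Letter n)} (hz : H ∉ z) (hm : H ∉ m)
    (h : z ++ H :: r = m ++ H :: r') : z = m ∧ r = r' := by
  rcases List.append_eq_append_iff.1 h with ⟨t, h1, h2⟩ | ⟨t, h1, h2⟩
  · rcases t with _ | ⟨a, t⟩
    · simp_all
    · simp at h2
      obtain ⟨rfl, -⟩ := h2
      exact absurd (by simp [h1]) hm
  · rcases t with _ | ⟨a, t⟩
    · simp_all
    · simp at h2
      obtain ⟨rfl, -⟩ := h2
      exact absurd (by simp [h1]) hz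

theorem KL.step (hHq : H ≠ q) (hH : H ∈ W)
    (hK : ∀ k ∈ K, ∀ a ∈ k, a ∈ W ∧ a ≠ q ∧ a ≠ H)
    {m r : List (Letter n)} (hm : H ∉ m) (hmK : q ∈ m ∨ m ∉ K)
    (h : ¬ KL W q H K (H :: r)) : ¬ KL W q H K (H :: (m ++ H :: r)) := by
  rintro (h1 | ⟨y, z, s, hy, hz, hs, h1⟩)
  · have hmem := h1.mem hHq hH hK
    rcases hmK with hmK | hmK
    · exact (hmem q (by simp [hmK])).2 rfl
    · rcases h1 with h1 | ⟨k, r', hk, hr', h1⟩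
      · simp at h1
      · simp only [List.cons.injEq, true_and] at h1
        have := free_unique hm (fun hh => (hK k hk H hh).2.2 rfl) h1
        exact hmK (this.1 ▸ hk)
  · have hHz : H ∉ z := fun hh => (hz H hh).2.2 rfl
    obtain ⟨s', rfl⟩ := hs.head
    have h2 : (H :: m) ++ H :: r = (y ++ [q]) ++ (z ++ H :: s') := by simpa using h1
    rcases List.append_eq_append_iff.1 h2 with ⟨t, h3, h4⟩ | ⟨t, h3, h4⟩
    · rcases List.eq_nil_or_concat t with rfl | ⟨t, b, rfl⟩
      · have := free_unique (z := []) (by simp) hHz h4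
        rw [← this.2] at hs
        exact h (Or.inl hs)
      · rw [List.concat_eq_append] at h3 h4
        rw [← List.append_assoc] at h3
        obtain ⟨h5, h6⟩ := List.append_inj' h3 rfl
        simp at h6
        subst h6
        refine h (Or.inr ⟨t, z, _, fun a ha => hy a ?_, hz, hs, ?_⟩)
        · rw [h5]
          simp [ha]
        · rw [h4]
          simp
    · have hHt : H ∉ t := by
        intro hh
        rcases y with _ | ⟨b, y⟩
        · simp at h3
          exact hHq h3.1
        · simp at h3
          exact hm (by simp [h3.2, hh])
      have := free_unique hHz hHt h4
      rw [this.2] at hs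
      exact h (Or.inl hs)

theorem KL.prep (hHq : H ≠ q) (hDq : D ≠ q) (hDH : D ≠ H)
    (hKD : ∀ k ∈ K, ∀ r, k ≠ D :: r)
    {t : List (Letter n)}
    (h : q ∉ t ∨ ¬ KL W q H K t) : ¬ KL W q H K (H :: D :: t) := by
  rintro (h1 | ⟨y, z, s, hy, hz, hs, h1⟩)
  · rcases h1 with h1 | ⟨k, r', hk, hr', h1⟩
    · simp at h1
    · simp only [List.cons.injEq, true_and] at h1
      rcases k with _ | ⟨b, k⟩
      · simp at h1
        exact hDH h1.1
      · simp at h1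
        exact hKD _ hk k (by rw [h1.1])
  · rcases y with _ | ⟨a, _ | ⟨b, y⟩⟩
    · simp at h1
      exact hHq h1.1
    · simp at h1
      exact hDq h1.2.1
    · simp at h1
      obtain ⟨rfl, rfl, rfl⟩ := h1
      rcases h with h | h
      · simp at h
      · exact h (Or.inr ⟨y, z, s, fun a ha => hy a (by simp [ha]), hz, hs, rfl⟩)

theorem KL.chain (hHq : H ≠ q) (hH : H ∈ W) (hDq : D ≠ q) (hDH : D ≠ H)
    (hK : ∀ k ∈ K, ∀ a ∈ k, a ∈ W ∧ a ≠ q ∧ a ≠ H)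
    (hKD : ∀ k ∈ K, ∀ r, k ≠ D :: r)
    {M : Language (Letter n)} (hM : ∀ m ∈ M, H ∉ m) (hMK : ∀ m ∈ M, q ∈ m ∨ m ∉ K)
    {s t : List (Letter n)} (hs : Chn H M s)
    (h : q ∉ t ∨ ¬ KL W q H K t) : ¬ KL W q H K (s ++ D :: t) := by
  induction hs with
  | base => exact KL.prep hHq hDq hDH hKD h
  | @step m w hm hc ih =>
    obtain ⟨r, rfl⟩ := hc.head
    have := KL.step (r := r ++ D :: t) hHq hH hK (hM m hm) (hMK m hm) ih
    simpa using this

end last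

theorem sep_last {n : ℕ} {W : Set (Letter n)} {q H D : Letter n} {K M M' : Language (Letter n)}
    (hHq : H ≠ q) (hH : H ∈ W) (hq : q ∈ W) (hDq : D ≠ q) (hDH : D ≠ H) (hP : PP K)
    (hK : ∀ k ∈ K, ∀ a ∈ k, a ∈ W ∧ a ≠ q ∧ a ≠ H)
    (hKD : ∀ k ∈ K, ∀ r, k ≠ D :: r)
    (hM : ∀ m ∈ M, H ∉ m) (hMK : ∀ m ∈ M, (∀ a ∈ m, a ∈ W) → q ∉ m → m ∈ K)
    (hM' : ∀ m ∈ M', H ∉ m) (hMK' : ∀ m ∈ M', m ∉ K) :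
    ∃ K1 : Language (Letter n), PP K1 ∧ (∀ w ∈ K1, ∀ a ∈ w, a ∈ W) ∧
      (∀ w, Chn H M w → (∀ a ∈ w, a ∈ W) → w ∈ K1) ∧
      (∀ s t, Chn H M' s → q ∉ t → s ++ D :: t ∉ K1) ∧
      (∀ N : Language (Letter n), (∀ m ∈ N, H ∉ m ∧ q ∈ m) → ∀ τ s t, Chn H N τ → Chn H M' s →
        q ∉ t → τ ++ D :: (s ++ D :: t) ∉ K1) := by
  have h1 : ∀ s t, Chn H M' s → q ∉ t → ¬ KL W q H K (s ++ D :: t) := fun s t hs ht =>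
    KL.chain hHq hH hDq hDH hK hKD hM' (fun m hm => Or.inr (hMK' m hm)) hs (Or.inl ht)
  refine ⟨mkL (KL W q H K), PP_KL W q H hP, fun w hw => KL.mem hHq hH hq hK hw,
    fun w hw hw' => KL.contains hHq hH hK hM hMK hw hw', h1, ?_⟩
  intro N hN τ s t hτ hs ht
  exact KL.chain hHq hH hDq hDH hK hKD (fun m hm => (hN m hm).1)
    (fun m hm => Or.inl (hN m hm).2) hτ (Or.inr (h1 s t hs ht))

theorem sep_first {n : ℕ} {W : Set (Letter n)} {q H D : Letter n} {K M M' : Language (Letter n)}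
    (hHq : H ≠ q) (hH : H ∈ W) (hq : q ∈ W) (hDq : D ≠ q) (hDH : D ≠ H) (hP : PP K)
    (hK : ∀ k ∈ K, ∀ a ∈ k, a ∈ W ∧ a ≠ q ∧ a ≠ H)
    (hKD : ∀ k ∈ K, ∀ r, k ≠ r ++ [D])
    (hM : ∀ m ∈ M, H ∉ m) (hMK : ∀ m ∈ M, (∀ a ∈ m, a ∈ W) → q ∉ m → m ∈ K)
    (hM' : ∀ m ∈ M', H ∉ m) (hMK' : ∀ m ∈ M', m ∉ K) :
    ∃ K1 : Language (Letter n), PP K1 ∧ (∀ w ∈ K1, ∀ a ∈ w, a ∈ W) ∧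
      (∀ w, Chn H M w → (∀ a ∈ w, a ∈ W) → w ∈ K1) ∧
      (∀ N : Language (Letter n), (∀ m ∈ N, H ∉ m ∧ q ∈ m) → ∀ τ s t, Chn H N τ → Chn H M' s →
        q ∉ t → t ++ D :: (s ++ D :: τ) ∉ K1) := by
  obtain ⟨K1, h1, h2, h3, -, h5⟩ := sep_last (W := W) (q := q) (H := H) (D := D) (K := mir K)
    (M := mir M) (M' := mir M') hHq hH hq hDq hDH hP.mir
    (fun k hk a ha => hK _ hk a (by simpa using ha))
    (fun k hk r hr => hKD _ hk r.reverse (by simp [hr]))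
    (fun m hm hh => hM _ hm (by simpa using hh))
    (fun m hm h h' => hMK _ hm (fun a ha => h a (by simpa using ha)) (by simpa using h'))
    (fun m hm hh => hM' _ hm (by simpa using hh))
    (fun m hm hh => hMK' _ hm hh)
  refine ⟨mir K1, h1.mir, fun w hw a ha => h2 _ hw a (by simpa using ha),
    fun w hw h => h3 _ hw.mir (fun a ha => h a (by simpa using ha)), ?_⟩
  intro N hN τ s t hτ hs ht hh
  refine h5 (mir N) (fun m hm => ?_) τ.reverse s.reverse t.reverse hτ.mir hs.mir (by simpa using ht) ?_
  · have := hN _ hm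
    simpa using this
  · simpa [mem_mir] using hh

/-! ### Unfolding the languages -/

/-- `x + x̄` -/
def x2 {n : ℕ} (j : Fin n) : Language (Letter n) := {w | w = [Letter.pos j] ∨ w = [Letter.neg j]}

/-- `(x + x̄) L $ (x + x̄)` -/
def MB {n : ℕ} (j : Fin n) (L : Language (Letter n)) : Language (Letter n) :=
  x2 j * L * ltr Letter.dollar * x2 j

/-- `p (B_i ∖ q)* $ p` -/
def TB {n : ℕ} (i : ℕ) (p q : Letter n) : Language (Letter n) :=
  ltr p * alphStar {a | a ∈ Bsub n i ∧ a ≠ q} * ltr Letter.dollar * ltr p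

theorem mem_MB {n : ℕ} {j : Fin n} {L : Language (Letter n)} {m : List (Letter n)} :
    m ∈ MB j L ↔ ∃ c b c', (c = Letter.pos j ∨ c = Letter.neg j) ∧ b ∈ L ∧
      (c' = Letter.pos j ∨ c' = Letter.neg j) ∧ m = c :: (b ++ [Letter.dollar, c']) := by
  have hx : ∀ w, w ∈ x2 j ↔ ∃ c, (c = Letter.pos j ∨ c = Letter.neg j) ∧ w = [c] := by
    intro w
    change (w = _ ∨ w = _) ↔ _
    simp [or_and_right, exists_or]
  simp only [MB, Language.mem_mul, mem_ltr, hx]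
  constructor
  · rintro ⟨_, ⟨_, ⟨_, ⟨c, hc, rfl⟩, b, hb, rfl⟩, _, rfl, rfl⟩, _, ⟨c', hc', rfl⟩, rfl⟩
    exact ⟨c, b, c', hc, hb, hc', by simp⟩
  · rintro ⟨c, b, c', hc, hb, hc', rfl⟩
    exact ⟨_, ⟨_, ⟨_, ⟨c, hc, rfl⟩, b, hb, rfl⟩, _, rfl, rfl⟩, _, ⟨c', hc', rfl⟩, by simp⟩

theorem mem_TB {n : ℕ} {i : ℕ} {p q : Letter n} {m : List (Letter n)} :
    m ∈ TB i p q ↔ ∃ b, (∀ a ∈ b, a ∈ Bsub n i ∧ a ≠ q) ∧ m = p :: (b ++ [Letter.dollar, p]) := by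
  simp only [TB, Language.mem_mul, mem_ltr]
  constructor
  · rintro ⟨_, ⟨_, ⟨_, rfl, b, hb, rfl⟩, _, rfl, rfl⟩, _, rfl, rfl⟩
    exact ⟨b, hb, by simp⟩
  · rintro ⟨b, hb, rfl⟩
    exact ⟨_, ⟨_, ⟨_, rfl, b, hb, rfl⟩, _, rfl, rfl⟩, _, rfl, by simp⟩

theorem LL_succ {n : ℕ} {Q : ℕ → Bool} {φ : List (List (Fin n × Bool))} {i : ℕ} (h : i < n) :
    LL n Q φ (i + 1) =
      ((ltr (.hash ⟨i, h⟩) * x2 ⟨i, h⟩ * (LL n Q φ i).1 * ltr .dollar * x2 ⟨i, h⟩)∗ *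
          ltr (.hash ⟨i, h⟩),
        if Q i then
          (ltr (.hash ⟨i, h⟩) * x2 ⟨i, h⟩ * (LL n Q φ i).2 * ltr .dollar * x2 ⟨i, h⟩)∗ *
            ltr (.hash ⟨i, h⟩) * ltr .dollar *
            ((ltr (.hash ⟨i, h⟩) * ltr (.pos ⟨i, h⟩) *
              alphStar {a | a ∈ Bsub n i ∧ a ≠ Letter.neg ⟨i, h⟩} * ltr .dollar *
              ltr (.pos ⟨i, h⟩))∗ * ltr (.hash ⟨i, h⟩) +
            (ltr (.hash ⟨i, h⟩) * ltr (.neg ⟨i, h⟩) *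
              alphStar {a | a ∈ Bsub n i ∧ a ≠ Letter.pos ⟨i, h⟩} * ltr .dollar *
              ltr (.neg ⟨i, h⟩))∗ * ltr (.hash ⟨i, h⟩))
        else
          (ltr (.hash ⟨i, h⟩) * ltr (.neg ⟨i, h⟩) *
              alphStar {a | a ∈ Bsub n i ∧ a ≠ Letter.pos ⟨i, h⟩} * ltr .dollar *
              ltr (.neg ⟨i, h⟩))∗ * ltr (.hash ⟨i, h⟩) * ltr .dollar *
          (ltr (.hash ⟨i, h⟩) * x2 ⟨i, h⟩ * (LL n Q φ i).2 * ltr .dollar * x2 ⟨i, h⟩)∗ *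
            ltr (.hash ⟨i, h⟩) * ltr .dollar *
            (ltr (.hash ⟨i, h⟩) * ltr (.pos ⟨i, h⟩) *
              alphStar {a | a ∈ Bsub n i ∧ a ≠ Letter.neg ⟨i, h⟩} * ltr .dollar *
              ltr (.pos ⟨i, h⟩))∗ * ltr (.hash ⟨i, h⟩)) := by
  rw [LL, dif_pos h]
  rfl

theorem mem_LL1 {n : ℕ} {Q : ℕ → Bool} {φ : List (List (Fin n × Bool))} {i : ℕ} (h : i < n)
    {w : List (Letter n)} : w ∈ (LL n Q φ (i + 1)).1 ↔
      Chn (Letter.hash ⟨i, h⟩) (MB ⟨i, h⟩ (LL n Q φ i).1) w := by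
  rw [← mem_chn]
  have : (LL n Q φ (i + 1)).1 = (ltr (Letter.hash ⟨i, h⟩) * MB ⟨i, h⟩ (LL n Q φ i).1)∗ *
      ltr (Letter.hash ⟨i, h⟩) := by
    simp only [LL_succ h, MB, mul_assoc]
  rw [this]

theorem mem_mul_D {n : ℕ} {K L : Language (Letter n)} {w : List (Letter n)} :
    w ∈ K * (ltr Letter.dollar * L) ↔ ∃ u v, u ∈ K ∧ v ∈ L ∧ w = u ++ Letter.dollar :: v := by
  rw [← mul_assoc]
  exact mem_marked

theorem mem_LL2_ex {n : ℕ} {Q : ℕ → Bool} {φ : List (List (Fin n × Bool))} {i : ℕ} (h : i < n)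
    (hQ : Q i = true) {w : List (Letter n)} : w ∈ (LL n Q φ (i + 1)).2 ↔
      ∃ s t, Chn (Letter.hash ⟨i, h⟩) (MB ⟨i, h⟩ (LL n Q φ i).2) s ∧
        (Chn (Letter.hash ⟨i, h⟩) (TB i (Letter.pos ⟨i, h⟩) (Letter.neg ⟨i, h⟩)) t ∨
          Chn (Letter.hash ⟨i, h⟩) (TB i (Letter.neg ⟨i, h⟩) (Letter.pos ⟨i, h⟩)) t) ∧
        w = s ++ Letter.dollar :: t := by
  simp only [← mem_chn]
  have : (LL n Q φ (i + 1)).2 = ((ltr (Letter.hash ⟨i, h⟩) * MB ⟨i, h⟩ (LL n Q φ i).2)∗ *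
      ltr (Letter.hash ⟨i, h⟩)) * (ltr Letter.dollar *
      ((ltr (Letter.hash ⟨i, h⟩) * TB i (Letter.pos ⟨i, h⟩) (Letter.neg ⟨i, h⟩))∗ *
        ltr (Letter.hash ⟨i, h⟩) +
      (ltr (Letter.hash ⟨i, h⟩) * TB i (Letter.neg ⟨i, h⟩) (Letter.pos ⟨i, h⟩))∗ *
        ltr (Letter.hash ⟨i, h⟩))) := by
    simp only [LL_succ h, hQ, MB, TB, mul_assoc, if_true]
  rw [this, mem_mul_D]
  rfl

theorem mem_LL2_all {n : ℕ} {Q : ℕ → Bool} {φ : List (List (Fin n × Bool))} {i : ℕ} (h : i < n)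
    (hQ : Q i = false) {w : List (Letter n)} : w ∈ (LL n Q φ (i + 1)).2 ↔
      ∃ τ s t, Chn (Letter.hash ⟨i, h⟩) (TB i (Letter.neg ⟨i, h⟩) (Letter.pos ⟨i, h⟩)) τ ∧
        Chn (Letter.hash ⟨i, h⟩) (MB ⟨i, h⟩ (LL n Q φ i).2) s ∧
        Chn (Letter.hash ⟨i, h⟩) (TB i (Letter.pos ⟨i, h⟩) (Letter.neg ⟨i, h⟩)) t ∧
        w = τ ++ Letter.dollar :: (s ++ Letter.dollar :: t) := by
  simp only [← mem_chn]
  have : (LL n Q φ (i + 1)).2 =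
      ((ltr (Letter.hash ⟨i, h⟩) * TB i (Letter.neg ⟨i, h⟩) (Letter.pos ⟨i, h⟩))∗ *
        ltr (Letter.hash ⟨i, h⟩)) * (ltr Letter.dollar *
      (((ltr (Letter.hash ⟨i, h⟩) * MB ⟨i, h⟩ (LL n Q φ i).2)∗ *
      ltr (Letter.hash ⟨i, h⟩)) * (ltr Letter.dollar *
      ((ltr (Letter.hash ⟨i, h⟩) * TB i (Letter.pos ⟨i, h⟩) (Letter.neg ⟨i, h⟩))∗ *
        ltr (Letter.hash ⟨i, h⟩))))) := by
    simp only [LL_succ h, hQ, MB, TB, mul_assoc, if_false, Bool.false_eq_true]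
  rw [this, mem_mul_D]
  simp only [mem_mul_D]
  constructor
  · rintro ⟨u, v, hu, ⟨s, t, hs, ht, rfl⟩, rfl⟩
    exact ⟨u, s, t, hu, hs, ht, rfl⟩
  · rintro ⟨u, s, t, hu, hs, ht, rfl⟩
    exact ⟨u, _, hu, ⟨s, t, hs, ht, rfl⟩, rfl⟩

theorem Chn.letters {n : ℕ} {H : Letter n} {M : Language (Letter n)} {S : Letter n → Prop}
    (hH : S H) (hM : ∀ m ∈ M, ∀ a ∈ m, S a) {w : List (Letter n)} (h : Chn H M w) :
    ∀ a ∈ w, S a := by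
  induction h with
  | base => simpa using hH
  | @step m w hm _ ih =>
    intro a ha
    simp at ha
    rcases ha with rfl | ha | ha
    · exact hH
    · exact hM m hm a ha
    · exact ih a ha

theorem Bsub_mono {n i : ℕ} {a : Letter n} (h : a ∈ Bsub n i) : a ∈ Bsub n (i + 1) := by
  cases a with
  | pos j => trivial
  | neg j => trivial
  | hash j =>
    change (j : ℕ) < i + 1
    have : (j : ℕ) < i := h
    omega
  | dollar => exact Nat.succ_pos i

theorem MB_letters {n i : ℕ} {j : Fin n} {L : Language (Letter n)}
    (hL : ∀ w ∈ L, ∀ a ∈ w, a ∈ Bsub n i) : ∀ m ∈ MB j L, ∀ a ∈ m, a ∈ Bsub n i ∨ a = .dollar := by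
  intro m hm a ha
  obtain ⟨c, b, c', hc, hb, hc', rfl⟩ := mem_MB.1 hm
  have hp : Letter.pos j ∈ Bsub n i := trivial
  have hn : Letter.neg j ∈ Bsub n i := trivial
  simp at ha
  rcases ha with rfl | ha | rfl | rfl
  · rcases hc with rfl | rfl
    · exact Or.inl hp
    · exact Or.inl hn
  · exact Or.inl (hL _ hb a ha)
  · exact Or.inr rfl
  · rcases hc' with rfl | rfl
    · exact Or.inl hp
    · exact Or.inl hn

theorem TB_letters {n i : ℕ} {p q : Letter n} (hp : p ∈ Bsub n i) (hpq : p ≠ q)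
    (hDq : Letter.dollar ≠ q) :
    ∀ m ∈ TB i p q, ∀ a ∈ m, (a ∈ Bsub n i ∨ a = .dollar) ∧ a ≠ q := by
  intro m hm a ha
  obtain ⟨b, hb, rfl⟩ := mem_TB.1 hm
  simp at ha
  rcases ha with rfl | ha | rfl | rfl
  · exact ⟨Or.inl hp, hpq⟩
  · exact ⟨Or.inl (hb a ha).1, (hb a ha).2⟩
  · exact ⟨Or.inr rfl, hDq⟩
  · exact ⟨Or.inl hp, hpq⟩

theorem hash_free {n i : ℕ} {h : i < n} {m : List (Letter n)}
    (hm : ∀ a ∈ m, a ∈ Bsub n i ∨ a = .dollar) : Letter.hash ⟨i, h⟩ ∉ m := by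
  intro hh
  rcases hm _ hh with h' | h'
  · exact lt_irrefl i h'
  · cases h'

theorem LL_letters {n : ℕ} {Q : ℕ → Bool} {φ : List (List (Fin n × Bool))} (i : ℕ) (hi : i ≤ n) :
    (∀ w ∈ (LL n Q φ i).1, ∀ a ∈ w, a ∈ Bsub n i) ∧
      (∀ w ∈ (LL n Q φ i).2, ∀ a ∈ w, a ∈ Bsub n i) := by
  induction i with
  | zero =>
    refine ⟨fun w hw => hw, ?_⟩
    change ∀ w ∈ (φ.map (clauseLang n)).prod, ∀ a ∈ w, a ∈ Bsub n 0
    induction φ with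
    | nil =>
      intro w hw
      simp [Language.mem_one] at hw
      simp [hw]
    | cons c φ ih =>
      intro w hw a ha
      simp only [List.map_cons, List.prod_cons] at hw
      obtain ⟨u, ⟨p, hp, rfl⟩, v, hv, rfl⟩ := Language.mem_mul.1 hw
      rcases List.mem_append.1 ha with h | h
      · simp at h
        subst h
        by_cases h2 : p.2 = true
        · rw [if_pos h2]
          trivial
        · rw [if_neg h2]
          trivial
      · exact ih v hv a h
  | succ i ih =>
    have hi' : i < n := hi
    obtain ⟨ih1, ih2⟩ := ih hi'.le
    have hD : Letter.dollar ∈ Bsub n (i + 1) := Nat.succ_pos i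
    have hH : Letter.hash ⟨i, hi'⟩ ∈ Bsub n (i + 1) := Nat.lt_succ_self i
    have up : ∀ a : Letter n, a ∈ Bsub n i ∨ a = .dollar → a ∈ Bsub n (i + 1) := by
      rintro a (h | rfl)
      · exact Bsub_mono h
      · exact hD
    have hM : ∀ L : Language (Letter n), (∀ w ∈ L, ∀ a ∈ w, a ∈ Bsub n i) → ∀ w,
        Chn (Letter.hash ⟨i, hi'⟩) (MB ⟨i, hi'⟩ L) w → ∀ a ∈ w, a ∈ Bsub n (i + 1) :=
      fun L hL w hw => hw.letters (S := fun a => a ∈ Bsub n (i + 1)) hH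
        (fun m hm a ha => up a (MB_letters hL m hm a ha))
    have hp : Letter.pos ⟨i, hi'⟩ ∈ Bsub n i := trivial
    have hn : Letter.neg ⟨i, hi'⟩ ∈ Bsub n i := trivial
    have hT : ∀ w, Chn (Letter.hash ⟨i, hi'⟩) (TB i (.pos ⟨i, hi'⟩) (.neg ⟨i, hi'⟩)) w →
        ∀ a ∈ w, a ∈ Bsub n (i + 1) :=
      fun w hw => hw.letters (S := fun a => a ∈ Bsub n (i + 1)) hH
        (fun m hm a ha => up a (TB_letters hp (by simp) (by simp) m hm a ha).1)
    have hT' : ∀ w, Chn (Letter.hash ⟨i, hi'⟩) (TB i (.neg ⟨i, hi'⟩) (.pos ⟨i, hi'⟩)) w →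
        ∀ a ∈ w, a ∈ Bsub n (i + 1) :=
      fun w hw => hw.letters (S := fun a => a ∈ Bsub n (i + 1)) hH
        (fun m hm a ha => up a (TB_letters hn (by simp) (by simp) m hm a ha).1)
    refine ⟨fun w hw => hM _ ih1 w ((mem_LL1 hi').1 hw), fun w hw a ha => ?_⟩
    cases hQ : Q i with
    | true =>
      obtain ⟨s, t, hs, ht, rfl⟩ := (mem_LL2_ex hi' hQ).1 hw
      simp at ha
      rcases ha with ha | rfl | ha
      · exact hM _ ih2 s hs a ha
      · exact hD
      · rcases ht with ht | ht
        · exact hT t ht a ha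
        · exact hT' t ht a ha
    | false =>
      obtain ⟨τ, s, t, hτ, hs, ht, rfl⟩ := (mem_LL2_all hi' hQ).1 hw
      simp at ha
      rcases ha with ha | rfl | ha | rfl | ha
      · exact hT' τ hτ a ha
      · exact hD
      · exact hM _ ih2 s hs a ha
      · exact hD
      · exact hT t ht a ha

/-! ### False formulas yield separable languages -/

/-- The letter for the literal `(j, b)`. -/
def lett {n : ℕ} (j : Fin n) (b : Bool) : Letter n := if b then Letter.pos j else Letter.neg j

theorem lett_mem_Val {n : ℕ} {i : ℕ} {v : Fin n → Bool} {j : Fin n} (b : Bool)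
    (h : (j : ℕ) < i ∨ v j = b) : lett j b ∈ Val n i v := by
  cases b
  · exact h
  · exact h

theorem Val_up {n i : ℕ} (h : i < n) {v : Fin n → Bool} {b : Bool} {a : Letter n}
    (ha : a ∈ Val n i (Function.update v ⟨i, h⟩ b)) :
    a ∈ Val n (i + 1) v ∧ a ≠ lett ⟨i, h⟩ (!b) ∧ a ≠ Letter.hash ⟨i, h⟩ := by
  have key : ∀ (j : Fin n) (c : Bool),
      ((j : ℕ) < i ∨ Function.update v ⟨i, h⟩ b j = c) → ((j : ℕ) < i + 1 ∨ v j = c) ∧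
        ¬ (j = ⟨i, h⟩ ∧ c = !b) := by
    intro j c hj
    by_cases hji : j = ⟨i, h⟩
    · subst hji
      simp at hj
      subst hj
      simp
    · rw [Function.update_of_ne hji] at hj
      refine ⟨?_, fun hh => hji hh.1⟩
      rcases hj with hj | hj
      · exact Or.inl (by omega)
      · exact Or.inr hj
  cases a with
  | pos j =>
    obtain ⟨h1, h2⟩ := key j true ha
    refine ⟨h1, ?_, by simp⟩
    cases b <;> simp_all [lett]
  | neg j =>
    obtain ⟨h1, h2⟩ := key j false ha
    refine ⟨h1, ?_, by simp⟩
    cases b <;> simp_all [lett]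
  | hash j =>
    have : (j : ℕ) < i := ha
    refine ⟨Nat.lt_succ_of_lt this, by cases b <;> simp [lett], ?_⟩
    intro hh
    cases hh
    simp at this
  | dollar => exact ⟨Nat.succ_pos i, by cases b <;> simp [lett], by simp⟩

theorem Val_down {n i : ℕ} (h : i < n) {v : Fin n → Bool} {b : Bool} {a : Letter n}
    (ha : a ∈ Val n (i + 1) v) (haB : a ∈ Bsub n i) (haq : a ≠ lett ⟨i, h⟩ (!b)) :
    a ∈ Val n i (Function.update v ⟨i, h⟩ b) := by
  have key : ∀ (j : Fin n) (c : Bool), ((j : ℕ) < i + 1 ∨ v j = c) →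
        ¬ (j = ⟨i, h⟩ ∧ c = !b) → 
      ((j : ℕ) < i ∨ Function.update v ⟨i, h⟩ b j = c) := by
    intro j c hj h2
    by_cases hji : j = ⟨i, h⟩
    · subst hji
      cases b <;> cases c <;> simp_all
    · rw [Function.update_of_ne hji]
      rcases hj with hj | hj
      · have : (j : ℕ) ≠ i := fun hh => hji (Fin.ext hh)
        exact Or.inl (by omega)
      · exact Or.inr hj
  cases a with
  | pos j =>
    refine key j true ha ?_
    rintro ⟨rfl, h2⟩
    cases b
    · exact haq rfl
    · simp at h2
  | neg j =>
    refine key j false ha ?_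
    rintro ⟨rfl, h2⟩
    cases b
    · simp at h2
    · exact haq rfl
  | hash j => exact haB
  | dollar => exact haB

theorem lett_cases {n : ℕ} {j : Fin n} {c : Letter n} (b : Bool)
    (h : c = .pos j ∨ c = .neg j) : c = lett j b ∨ c = lett j (!b) := by
  cases b <;> simp [lett] <;> tauto

theorem lett_ne {n : ℕ} (j : Fin n) (b : Bool) : lett j b ≠ lett j (!b) := by
  cases b <;> simp [lett]

theorem sep_prep {n i : ℕ} (h : i < n) {v : Fin n → Bool} {b : Bool}
    {K L L' : Language (Letter n)} (hP : PP K)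
    (hK : ∀ w ∈ K, ∀ a ∈ w, a ∈ Val n i (Function.update v ⟨i, h⟩ b))
    (hLB : ∀ w ∈ L, ∀ a ∈ w, a ∈ Bsub n i)
    (hLK : ∀ w ∈ L, (∀ a ∈ w, a ∈ Val n i (Function.update v ⟨i, h⟩ b)) → w ∈ K)
    (hLK' : ∀ w ∈ L', w ∉ K) :
    ∃ Kh : Language (Letter n), PP Kh ∧
      (∀ k ∈ Kh, ∀ a ∈ k, a ∈ Val n (i + 1) v ∧ a ≠ lett ⟨i, h⟩ (!b) ∧ a ≠ Letter.hash ⟨i, h⟩) ∧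
      (∀ k ∈ Kh, ∀ r, k ≠ Letter.dollar :: r) ∧
      (∀ k ∈ Kh, ∀ r, k ≠ r ++ [Letter.dollar]) ∧
      (∀ m ∈ MB ⟨i, h⟩ L, (∀ a ∈ m, a ∈ Val n (i + 1) v) → lett ⟨i, h⟩ (!b) ∉ m → m ∈ Kh) ∧
      (∀ m ∈ MB ⟨i, h⟩ L', m ∉ Kh) := by
  have hmem : ∀ k, k ∈ alphStar (∅ : Set (Letter n)) * {[lett ⟨i, h⟩ b]} *
      (K * {[Letter.dollar]} * (alphStar ∅ * {[lett ⟨i, h⟩ b]} * alphStar ∅)) ↔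
      ∃ u ∈ K, k = lett ⟨i, h⟩ b :: (u ++ [Letter.dollar, lett ⟨i, h⟩ b]) := by
    have he : ∀ w : List (Letter n), w ∈ alphStar (∅ : Set (Letter n)) ↔ w = [] := by
      intro w
      cases w with
      | nil => simp [mem_alphStar]
      | cons a w => exact ⟨fun h => absurd (h a (by simp)) (by simp), fun h => by cases h⟩
    intro k
    simp only [mem_marked, he]
    constructor
    · rintro ⟨_, _, rfl, ⟨u, _, hu, ⟨_, _, rfl, rfl, rfl⟩, rfl⟩, rfl⟩
      exact ⟨u, hu, by simp⟩
    · rintro ⟨u, hu, rfl⟩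
      exact ⟨_, _, rfl, ⟨u, _, hu, ⟨_, _, rfl, rfl, rfl⟩, rfl⟩, by simp⟩
  have hpV : lett ⟨i, h⟩ b ∈ Val n i (Function.update v ⟨i, h⟩ b) :=
    lett_mem_Val b (Or.inr (by simp))
  refine ⟨_, PP.marked (lett ⟨i, h⟩ b) (PP.star ∅) (PP.marked Letter.dollar hP
    (PP.marked (lett ⟨i, h⟩ b) (PP.star ∅) (PP.star ∅))), ?_, ?_, ?_, ?_, ?_⟩
  · intro k hk a ha
    obtain ⟨u, hu, rfl⟩ := (hmem k).1 hk
    simp at ha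
    rcases ha with rfl | ha | rfl | rfl
    · exact Val_up h hpV
    · exact Val_up h (hK u hu a ha)
    · exact ⟨Nat.succ_pos i, by cases b <;> simp [lett], by simp⟩
    · exact Val_up h hpV
  · intro k hk r hr
    obtain ⟨u, hu, rfl⟩ := (hmem k).1 hk
    simp at hr
    cases b <;> simp [lett] at hr
  · intro k hk r hr
    obtain ⟨u, hu, rfl⟩ := (hmem k).1 hk
    have := congrArg List.getLast? hr
    simp [List.getLast?_cons, List.getLast?_append] at this
    cases b <;> simp [lett] at this
  · intro m hm hmV hq
    obtain ⟨c, u, c', hc, hu, hc', rfl⟩ := mem_MB.1 hm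
    refine (hmem _).2 ⟨u, hLK u hu fun a ha => ?_, ?_⟩
    · refine Val_down h (hmV a (by simp [ha])) (hLB u hu a ha) ?_
      rintro rfl
      exact hq (by simp [ha])
    · rcases lett_cases b hc with rfl | rfl
      · rcases lett_cases b hc' with rfl | rfl
        · rfl
        · exact absurd (by simp) hq
      · exact absurd (by simp) hq
  · intro m hm hk
    obtain ⟨c, u, c', hc, hu, hc', rfl⟩ := mem_MB.1 hm
    obtain ⟨u', hu', h'⟩ := (hmem _).1 hk
    simp only [List.cons.injEq] at h'
    have := (List.append_inj' h'.2 rfl).1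
    exact hLK' u hu (this ▸ hu')

theorem QTruth_succ {n : ℕ} {Q : ℕ → Bool} {φ : List (List (Fin n × Bool))} {i : ℕ} (h : i < n)
    (v : Fin n → Bool) : QTruth n Q φ (i + 1) v ↔
      if Q i then ∃ b : Bool, QTruth n Q φ i (Function.update v ⟨i, h⟩ b)
        else ∀ b : Bool, QTruth n Q φ i (Function.update v ⟨i, h⟩ b) := by
  rw [QTruth, dif_pos h]

theorem prod_sat {n : ℕ} {φ : List (List (Fin n × Bool))} {v : Fin n → Bool} :
    (∃ w ∈ (φ.map (clauseLang n)).prod, ∀ a ∈ w, a ∈ Val n 0 v) ↔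
      ∀ c ∈ φ, ∃ p ∈ c, v p.1 = p.2 := by
  have hl : ∀ p : Fin n × Bool, (if p.2 = true then Letter.pos p.1 else Letter.neg p.1) ∈ Val n 0 v
      ↔ v p.1 = p.2 := by
    rintro ⟨j, b⟩
    cases b
    · change ((j : ℕ) < 0 ∨ v j = false) ↔ _
      simp
    · change ((j : ℕ) < 0 ∨ v j = true) ↔ _
      simp
  induction φ with
  | nil =>
    simp only [List.map_nil, List.prod_nil, Language.mem_one]
    simp
  | cons c φ ih =>
    simp only [List.map_cons, List.prod_cons, List.forall_mem_cons]
    refine Iff.trans ?_ (and_congr Iff.rfl ih)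
    constructor
    · rintro ⟨w, hw, hv⟩
      obtain ⟨u, ⟨p, hp, rfl⟩, w', hw', rfl⟩ := Language.mem_mul.1 hw
      exact ⟨⟨p, hp, (hl p).1 (hv _ (by simp))⟩, w', hw', fun a ha => hv a (by simp [ha])⟩
    · rintro ⟨⟨p, hp, hpv⟩, w', hw', hv⟩
      refine ⟨_, Language.mem_mul.2 ⟨_, ⟨p, hp, rfl⟩, w', hw', rfl⟩, ?_⟩
      intro a ha
      simp only [List.cons_append, List.nil_append, List.mem_cons] at ha
      rcases ha with rfl | ha
      · exact (hl p).2 hpv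
      · exact hv a ha

theorem sep_of_false {n : ℕ} {Q : ℕ → Bool} {φ : List (List (Fin n × Bool))} (i : ℕ) (hi : i ≤ n) :
    ∀ v : Fin n → Bool, ¬ QTruth n Q φ i v → ∃ K : Language (Letter n), PP K ∧
      (∀ w ∈ K, ∀ a ∈ w, a ∈ Val n i v) ∧
      (∀ w ∈ (LL n Q φ i).1, (∀ a ∈ w, a ∈ Val n i v) → w ∈ K) ∧
      (∀ w ∈ (LL n Q φ i).2, w ∉ K) := by
  induction i with
  | zero =>
    intro v hv
    refine ⟨alphStar (Val n 0 v), PP.star _, fun w hw => hw, fun w _ hw => hw, ?_⟩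
    intro w hw hw'
    exact hv (prod_sat.1 ⟨w, hw, hw'⟩)
  | succ i ih =>
    intro v hv
    have hi' : i < n := hi
    have ih := ih hi'.le
    rw [QTruth_succ hi'] at hv
    obtain ⟨hB1, hB2⟩ := LL_letters (Q := Q) (φ := φ) i hi'.le
    have hHW : Letter.hash ⟨i, hi'⟩ ∈ Val n (i + 1) v := Nat.lt_succ_self i
    have hqW : ∀ b, lett ⟨i, hi'⟩ b ∈ Val n (i + 1) v :=
      fun b => lett_mem_Val b (Or.inl (Nat.lt_succ_self i))
    have hHq : ∀ b, Letter.hash ⟨i, hi'⟩ ≠ lett ⟨i, hi'⟩ b := by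
      intro b
      cases b <;> simp [lett]
    have hDq : ∀ b, Letter.dollar ≠ lett (⟨i, hi'⟩ : Fin n) b := by
      intro b
      cases b <;> simp [lett]
    have hDH : Letter.dollar ≠ Letter.hash (⟨i, hi'⟩ : Fin n) := by simp
    have hM1 : ∀ m ∈ MB ⟨i, hi'⟩ (LL n Q φ i).1, Letter.hash ⟨i, hi'⟩ ∉ m :=
      fun m hm => hash_free (MB_letters hB1 m hm)
    have hM2 : ∀ m ∈ MB ⟨i, hi'⟩ (LL n Q φ i).2, Letter.hash ⟨i, hi'⟩ ∉ m :=
      fun m hm => hash_free (MB_letters hB2 m hm)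
    have hlB : ∀ b, lett ⟨i, hi'⟩ b ∈ Bsub n i := by
      intro b
      cases b <;> trivial
    have hTfree : ∀ b t, Chn (Letter.hash ⟨i, hi'⟩)
        (TB i (lett ⟨i, hi'⟩ b) (lett ⟨i, hi'⟩ (!b))) t → lett ⟨i, hi'⟩ (!b) ∉ t := by
      intro b t ht hh
      exact ht.letters (S := fun a => a ≠ lett ⟨i, hi'⟩ (!b)) (hHq _)
        (fun m hm a ha => (TB_letters (hlB b) (lett_ne _ b) (hDq _) m hm a ha).2) _ hh rfl
    have hTN : ∀ b, ∀ m ∈ TB i (lett ⟨i, hi'⟩ (!b)) (lett ⟨i, hi'⟩ b),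
        Letter.hash ⟨i, hi'⟩ ∉ m ∧ lett ⟨i, hi'⟩ (!b) ∈ m := by
      intro b m hm
      refine ⟨hash_free fun a ha =>
        (TB_letters (hlB (!b)) (lett_ne _ b).symm (hDq _) m hm a ha).1, ?_⟩
      obtain ⟨u, -, rfl⟩ := mem_TB.1 hm
      simp
    cases hQ : Q i with
    | true =>
      simp only [hQ, if_true, not_exists] at hv
      have key : ∀ b, ∃ K : Language (Letter n), PP K ∧
          (∀ w ∈ K, ∀ a ∈ w, a ∈ Val n (i + 1) v) ∧
          (∀ w ∈ (LL n Q φ (i + 1)).1, (∀ a ∈ w, a ∈ Val n (i + 1) v) → w ∈ K) ∧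
          (∀ s t, Chn (Letter.hash ⟨i, hi'⟩) (MB ⟨i, hi'⟩ (LL n Q φ i).2) s →
            Chn (Letter.hash ⟨i, hi'⟩) (TB i (lett ⟨i, hi'⟩ b) (lett ⟨i, hi'⟩ (!b))) t →
            s ++ Letter.dollar :: t ∉ K) := by
        intro b
        obtain ⟨K, hP, hK1, hK2, hK3⟩ := ih _ (hv b)
        obtain ⟨Kh, a1, a2, a3, a4, a5, a6⟩ := sep_prep hi' hP hK1 hB1 hK2 hK3
        obtain ⟨K1, b1, b2, b3, b4, -⟩ := sep_last (hHq _) hHW (hqW _) (hDq _) hDH a1 a2 a3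
          hM1 a5 hM2 a6
        exact ⟨K1, b1, b2, fun w hw h => b3 w ((mem_LL1 hi').1 hw) h,
          fun s t hs ht => b4 s t hs (hTfree b t ht)⟩
      obtain ⟨K1, a1, a2, a3, a4⟩ := key true
      obtain ⟨K2, b1, b2, b3, b4⟩ := key false
      refine ⟨K1 ⊓ K2, a1.inf b1, fun w hw => a2 w hw.1, fun w hw h => ⟨a3 w hw h, b3 w hw h⟩, ?_⟩
      intro w hw hwK
      obtain ⟨s, t, hs, ht | ht, rfl⟩ := (mem_LL2_ex hi' hQ).1 hw
      · exact a4 s t hs ht hwK.1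
      · exact b4 s t hs ht hwK.2
    | false =>
      simp only [hQ, if_false, Bool.false_eq_true, not_forall] at hv
      obtain ⟨b, hb⟩ := hv
      obtain ⟨K, hP, hK1, hK2, hK3⟩ := ih _ hb
      obtain ⟨Kh, a1, a2, a3, a4, a5, a6⟩ := sep_prep hi' hP hK1 hB1 hK2 hK3
      cases b with
      | true =>
        obtain ⟨K1, b1, b2, b3, -, b5⟩ := sep_last (hHq _) hHW (hqW _) (hDq _) hDH a1 a2 a3
          hM1 a5 hM2 a6
        refine ⟨K1, b1, b2, fun w hw h => b3 w ((mem_LL1 hi').1 hw) h, ?_⟩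
        intro w hw
        obtain ⟨τ, s, t, hτ, hs, ht, rfl⟩ := (mem_LL2_all hi' hQ).1 hw
        exact b5 _ (hTN true) τ s t hτ hs (hTfree true t ht)
      | false =>
        obtain ⟨K1, b1, b2, b3, b5⟩ := sep_first (hHq _) hHW (hqW _) (hDq _) hDH a1 a2 a4
          hM1 a5 hM2 a6
        refine ⟨K1, b1, b2, fun w hw h => b3 w ((mem_LL1 hi').1 hw) h, ?_⟩
        intro w hw
        obtain ⟨τ, s, t, hτ, hs, ht, rfl⟩ := (mem_LL2_all hi' hQ).1 hw
        exact b5 _ (hTN false) t s τ ht hs (hTfree false τ hτ)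


/-! ### True formulas yield non-separable languages -/

/-- Words with the same scattered subwords of length at most `k`. -/
def SimK {A : Type} (k : ℕ) (u v : List A) : Prop :=
  ∀ s : List A, s.length ≤ k → (s.Sublist u ↔ s.Sublist v)

/-- The preorder of rank `m` over `SimK k`. -/
def PreK {A : Type} (k : ℕ) : ℕ → List A → List A → Prop
  | 0, u, v => SimK k u v
  | m + 1, u, v => PreK k m u v ∧ ∀ u1 a u2, u = u1 ++ a :: u2 →
      ∃ v1 v2, v = v1 ++ a :: v2 ∧ PreK k m u1 v1 ∧ PreK k m u2 v2

theorem SimK.mono {A : Type} {k k' : ℕ} (h : k ≤ k') {u v : List A} (hs : SimK k' u v) :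
    SimK k u v := fun s hl => hs s (hl.trans h)

theorem PreK.mono_k {A : Type} {k k' : ℕ} (h : k ≤ k') {m : ℕ} {u v : List A}
    (hs : PreK k' m u v) : PreK k m u v := by
  induction m generalizing u v with
  | zero => exact SimK.mono h hs
  | succ m ih =>
    refine ⟨ih hs.1, fun u1 a u2 hu => ?_⟩
    obtain ⟨v1, v2, hv, h1, h2⟩ := hs.2 u1 a u2 hu
    exact ⟨v1, v2, hv, ih h1, ih h2⟩

theorem PreK.mono_m {A : Type} {k m m' : ℕ} (h : m ≤ m') {u v : List A}
    (hs : PreK k m' u v) : PreK k m u v := by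
  induction h with
  | refl => exact hs
  | step _ ih => exact ih hs.1

theorem PreK.refl {A : Type} {k m : ℕ} (u : List A) : PreK k m u u := by
  induction m generalizing u with
  | zero => exact fun s _ => Iff.rfl
  | succ m ih => exact ⟨ih u, fun u1 a u2 hu => ⟨u1, u2, hu, ih _, ih _⟩⟩

theorem PreK.trans {A : Type} {k m : ℕ} {u v w : List A} (h1 : PreK k m u v)
    (h2 : PreK k m v w) : PreK k m u w := by
  induction m generalizing u v w with
  | zero => exact fun s hs => (h1 s hs).trans (h2 s hs)
  | succ m ih =>
    refine ⟨ih h1.1 h2.1, fun u1 a u2 hu => ?_⟩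
    obtain ⟨v1, v2, hv, a1, a2⟩ := h1.2 u1 a u2 hu
    obtain ⟨w1, w2, hw, b1, b2⟩ := h2.2 v1 a v2 hv
    exact ⟨w1, w2, hw, ih a1 b1, ih a2 b2⟩

theorem SimK.append {A : Type} {k : ℕ} {u v u' v' : List A} (h1 : SimK k u v)
    (h2 : SimK k u' v') : SimK k (u ++ u') (v ++ v') := by
  intro s hs
  simp only [List.sublist_append_iff]
  constructor
  · rintro ⟨s1, s2, rfl, a1, a2⟩
    simp only [List.length_append] at hs
    exact ⟨s1, s2, rfl, (h1 s1 (by omega)).1 a1, (h2 s2 (by omega)).1 a2⟩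
  · rintro ⟨s1, s2, rfl, a1, a2⟩
    simp only [List.length_append] at hs
    exact ⟨s1, s2, rfl, (h1 s1 (by omega)).2 a1, (h2 s2 (by omega)).2 a2⟩

theorem PreK.append {A : Type} {k m : ℕ} {u v u' v' : List A} (h1 : PreK k m u v)
    (h2 : PreK k m u' v') : PreK k m (u ++ u') (v ++ v') := by
  induction m generalizing u v u' v' with
  | zero => exact SimK.append h1 h2
  | succ m ih =>
    refine ⟨ih h1.1 h2.1, fun u1 a u2 hu => ?_⟩
    rcases List.append_eq_append_iff.1 hu with ⟨r, e1, e2⟩ | ⟨r, e1, e2⟩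
    · obtain ⟨v1, v2, hv, a1, a2⟩ := h2.2 r a u2 e2
      exact ⟨v ++ v1, v2, by simp [hv], e1 ▸ ih h1.1 a1, a2⟩
    · cases r with
      | nil =>
        simp only [List.nil_append] at e2
        simp only [List.append_nil] at e1
        obtain ⟨v1, v2, hv, a1, a2⟩ := h2.2 [] a u2 (by simp [e2])
        refine ⟨v ++ v1, v2, by simp [hv], ?_, a2⟩
        have := ih h1.1 a1
        rwa [List.append_nil, e1] at this
      | cons c r =>
        simp only [List.cons_append, List.cons.injEq] at e2
        obtain ⟨rfl, rfl⟩ := e2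
        obtain ⟨v1, v2, hv, a1, a2⟩ := h1.2 u1 a r e1
        exact ⟨v1, v2 ++ v', by simp [hv], a1, ih a2 h2.1⟩

theorem mem_markedA {A : Type} {K L : Language A} {a : A} {w : List A} :
    w ∈ K * {[a]} * L ↔ ∃ u v, u ∈ K ∧ v ∈ L ∧ w = u ++ a :: v := by
  simp only [Language.mem_mul]
  constructor
  · rintro ⟨_, ⟨u, hu, _, rfl, rfl⟩, v, hv, rfl⟩
    exact ⟨u, v, hu, hv, by simp⟩
  · rintro ⟨u, v, hu, hv, rfl⟩
    exact ⟨_, ⟨u, hu, _, rfl, rfl⟩, v, hv, by simp⟩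

theorem pol_basis {A : Type} {L : Language A}
    (h : PolClosure {(⊥ : Language A), (⊤ : Language A)} L) :
    ∃ k, ∀ u ∈ L, ∃ s : List A, s.length ≤ k ∧ s.Sublist u ∧ ∀ v, s.Sublist v → v ∈ L := by
  induction h with
  | base h =>
    rcases h with rfl | rfl
    · exact ⟨0, fun u hu => hu.elim⟩
    · exact ⟨0, fun u _ => ⟨[], by simp, by simp, fun v _ => trivial⟩⟩
  | union _ _ ih1 ih2 =>
    obtain ⟨k1, h1⟩ := ih1
    obtain ⟨k2, h2⟩ := ih2
    refine ⟨max k1 k2, ?_⟩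
    rintro u (hu | hu)
    · obtain ⟨s, a, b, c⟩ := h1 u hu
      exact ⟨s, a.trans (le_max_left _ _), b, fun v hv => Or.inl (c v hv)⟩
    · obtain ⟨s, a, b, c⟩ := h2 u hu
      exact ⟨s, a.trans (le_max_right _ _), b, fun v hv => Or.inr (c v hv)⟩
  | marked x _ _ ih1 ih2 =>
    obtain ⟨k1, h1⟩ := ih1
    obtain ⟨k2, h2⟩ := ih2
    refine ⟨k1 + k2 + 1, ?_⟩
    intro u hu
    obtain ⟨u1, u2, hu1, hu2, rfl⟩ := mem_markedA.1 hu
    obtain ⟨s, a, b, c⟩ := h1 u1 hu1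
    obtain ⟨s', a', b', c'⟩ := h2 u2 hu2
    refine ⟨s ++ x :: s', by simp; omega, b.append (b'.cons_cons x), fun v hv => ?_⟩
    obtain ⟨v1, v2, rfl, hv1, hv2⟩ := List.append_sublist_iff.1 hv
    obtain ⟨r1, r2, rfl, hx, hr⟩ := List.cons_sublist_iff.1 hv2
    obtain ⟨p, q, rfl⟩ := List.append_of_mem hx
    exact mem_markedA.2 ⟨v1 ++ p, q ++ r2, c _ (hv1.trans (List.sublist_append_left _ _)),
      c' _ (hr.trans (List.sublist_append_right _ _)), by simp⟩

theorem bool_basis {A : Type} {L : Language A}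
    (h : BoolClosure {L | PolClosure {(⊥ : Language A), (⊤ : Language A)} L} L) :
    ∃ k, ∀ u v, SimK k u v → (u ∈ L ↔ v ∈ L) := by
  induction h with
  | base h =>
    obtain ⟨k, hk⟩ := pol_basis h
    refine ⟨k, fun u v huv => ⟨fun hu => ?_, fun hv => ?_⟩⟩
    · obtain ⟨s, a, b, c⟩ := hk u hu
      exact c v ((huv s a).1 b)
    · obtain ⟨s, a, b, c⟩ := hk v hv
      exact c u ((huv s a).2 b)
  | compl _ ih =>
    obtain ⟨k, hk⟩ := ih
    exact ⟨k, fun u v huv => not_congr (hk u v huv)⟩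
  | union _ _ ih1 ih2 =>
    obtain ⟨k1, h1⟩ := ih1
    obtain ⟨k2, h2⟩ := ih2
    exact ⟨max k1 k2, fun u v huv => or_congr (h1 u v (huv.mono (le_max_left _ _)))
      (h2 u v (huv.mono (le_max_right _ _)))⟩
  | inter _ _ ih1 ih2 =>
    obtain ⟨k1, h1⟩ := ih1
    obtain ⟨k2, h2⟩ := ih2
    exact ⟨max k1 k2, fun u v huv => and_congr (h1 u v (huv.mono (le_max_left _ _)))
      (h2 u v (huv.mono (le_max_right _ _)))⟩

theorem three_basis {A : Type} {L : Language A}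
    (h : PolClosure {L | BoolClosure {L | PolClosure {(⊥ : Language A), (⊤ : Language A)} L} L} L) :
    ∃ k m, ∀ u v, PreK k m u v → u ∈ L → v ∈ L := by
  induction h with
  | base h =>
    obtain ⟨k, hk⟩ := bool_basis h
    exact ⟨k, 0, fun u v huv => (hk u v huv).1⟩
  | union _ _ ih1 ih2 =>
    obtain ⟨k1, m1, h1⟩ := ih1
    obtain ⟨k2, m2, h2⟩ := ih2
    refine ⟨max k1 k2, max m1 m2, fun u v huv hu => ?_⟩
    rcases hu with hu | hu
    · exact Or.inl (h1 u v ((huv.mono_k (le_max_left _ _)).mono_m (le_max_left _ _)) hu)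
    · exact Or.inr (h2 u v ((huv.mono_k (le_max_right _ _)).mono_m (le_max_right _ _)) hu)
  | marked x _ _ ih1 ih2 =>
    obtain ⟨k1, m1, h1⟩ := ih1
    obtain ⟨k2, m2, h2⟩ := ih2
    refine ⟨max k1 k2, max m1 m2 + 1, fun u v huv hu => ?_⟩
    obtain ⟨u1, u2, hu1, hu2, rfl⟩ := mem_markedA.1 hu
    obtain ⟨v1, v2, rfl, a1, a2⟩ := huv.2 u1 x u2 rfl
    exact mem_markedA.2 ⟨v1, v2,
      h1 _ _ ((a1.mono_k (le_max_left _ _)).mono_m (le_max_left _ _)) hu1,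
      h2 _ _ ((a2.mono_k (le_max_right _ _)).mono_m (le_max_right _ _)) hu2, rfl⟩

/-- The power of a word. -/
def rep {A : Type} (e : List A) (q : ℕ) : List A := (List.replicate q e).flatten

theorem rep_zero {A : Type} (e : List A) : rep e 0 = [] := by simp [rep]

theorem rep_succ {A : Type} (e : List A) (q : ℕ) : rep e (q + 1) = e ++ rep e q := by
  simp [rep, List.replicate_succ]

theorem rep_add {A : Type} (e : List A) (p q : ℕ) : rep e (p + q) = rep e p ++ rep e q := by
  simp only [rep, List.replicate_add, List.flatten_append]

theorem mem_rep {A : Type} {e : List A} {q : ℕ} {a : A} (h : a ∈ rep e q) : a ∈ e := by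
  simp [rep] at h
  exact h.2

theorem rep_split {A : Type} {e : List A} {q : ℕ} {u1 u2 : List A} {a : A}
    (h : rep e q = u1 ++ a :: u2) : ∃ j l e1 e2, q = j + (l + 1) ∧ e = e1 ++ a :: e2 ∧
      u1 = rep e j ++ e1 ∧ u2 = e2 ++ rep e l := by
  induction q generalizing u1 with
  | zero => simp [rep_zero] at h
  | succ q ih =>
    rw [rep_succ] at h
    rcases List.append_eq_append_iff.1 h with ⟨r, h1, h2⟩ | ⟨r, h1, h2⟩
    · obtain ⟨j, l, e1, e2, rfl, he, h3, h4⟩ := ih h2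
      exact ⟨j + 1, l, e1, e2, by omega, he, by simp [h1, h3, rep_succ], h4⟩
    · cases r with
      | nil =>
        simp only [List.nil_append] at h2
        obtain ⟨j, l, e1, e2, rfl, he, h3, h4⟩ := ih (u1 := []) h2.symm
        refine ⟨j + 1, l, e1, e2, by omega, he, ?_, h4⟩
        rw [rep_succ, List.append_assoc, ← h3, h1]
        simp
      | cons c r =>
        simp only [List.cons_append, List.cons.injEq] at h2
        obtain ⟨rfl, rfl⟩ := h2
        exact ⟨0, q, u1, r, by omega, h1, by simp [rep_zero], rfl⟩

theorem rep_sub {A : Type} {e s : List A} {q : ℕ} (hs : ∀ a ∈ s, a ∈ e) (hq : s.length ≤ q) :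
    s.Sublist (rep e q) := by
  induction s generalizing q with
  | nil => simp
  | cons a s ih =>
    cases q with
    | zero => simp at hq
    | succ q =>
      rw [rep_succ]
      have h1 : [a].Sublist e := List.singleton_sublist.2 (hs a (by simp))
      exact h1.append (ih (fun b hb => hs b (by simp [hb])) (by simpa using hq))

theorem PreK.pump {A : Type} (k m : ℕ) : ∃ p : ℕ, ∀ e t : List A, (∀ a ∈ t, a ∈ e) →
    ∀ q r1 r2, p ≤ q → p ≤ r1 → p ≤ r2 → PreK k m (rep e q) (rep e r1 ++ t ++ rep e r2) := by
  induction m with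
  | zero =>
    refine ⟨k, fun e t ht q r1 r2 hq h1 h2 s hs => ⟨fun h => ?_, fun h => ?_⟩⟩
    · have := rep_sub (q := r1) (fun a ha => mem_rep (h.subset ha)) (hs.trans h1)
      rw [List.append_assoc]
      exact this.trans (List.sublist_append_left _ _)
    · refine rep_sub (fun a ha => ?_) (hs.trans hq)
      have := h.subset ha
      simp only [List.mem_append] at this
      rcases this with (h | h) | h
      · exact mem_rep h
      · exact ht a h
      · exact mem_rep h
  | succ m ih =>
    obtain ⟨p, hp⟩ := ih
    refine ⟨3 * p + 1, fun e t ht q r1 r2 hq h1 h2 =>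
      ⟨hp e t ht q r1 r2 (by omega) (by omega) (by omega), fun u1 a u2 hu => ?_⟩⟩
    obtain ⟨j, l, e1, e2, rfl, he, rfl, rfl⟩ := rep_split hu
    by_cases hj : j < p
    · obtain ⟨d, rfl⟩ : ∃ d, r1 = j + (d + 1) := ⟨r1 - 1 - j, by omega⟩
      refine ⟨rep e j ++ e1, e2 ++ (rep e d ++ t ++ rep e r2), ?_, PreK.refl _,
        (PreK.refl e2).append (hp e t ht _ _ _ (by omega) (by omega) (by omega))⟩
      rw [rep_add, rep_succ]
      nth_rewrite 2 [he]
      simp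
    · by_cases hl : l < p
      · obtain ⟨d, rfl⟩ : ∃ d, r2 = d + (l + 1) := ⟨r2 - 1 - l, by omega⟩
        refine ⟨(rep e r1 ++ t ++ rep e d) ++ e1, e2 ++ rep e l, ?_,
          (hp e t ht _ _ _ (by omega) (by omega) (by omega)).append (PreK.refl e1), PreK.refl _⟩
        rw [rep_add, rep_succ]
        nth_rewrite 3 [he]
        simp
      · obtain ⟨d, rfl⟩ : ∃ d, r1 = (p + p) + (d + 1) := ⟨r1 - 1 - (p + p), by omega⟩
        refine ⟨rep e (p + p) ++ e1, e2 ++ (rep e d ++ t ++ rep e r2), ?_, ?_,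
          (PreK.refl e2).append (hp e t ht _ _ _ (by omega) (by omega) (by omega))⟩
        · rw [rep_add e (p + p), rep_succ]
          nth_rewrite 2 [he]
          simp
        · have := hp e [] (by simp) j p p (by omega) le_rfl le_rfl
          rw [List.append_nil, ← rep_add] at this
          exact this.append (PreK.refl e1)

theorem PreK.rep {A : Type} {k m : ℕ} {e e' : List A} (h : PreK k m e e') (q : ℕ) :
    PreK k m (rep e q) (rep e' q) := by
  induction q with
  | zero => rw [rep_zero, rep_zero]; exact PreK.refl _
  | succ q ih => rw [rep_succ, rep_succ]; exact h.append ih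

theorem Chn.rep {n : ℕ} {H : Letter n} {M : Language (Letter n)} {m t : List (Letter n)}
    (hm : m ∈ M) (ht : Chn H M t) (q : ℕ) : Chn H M (rep (H :: m) q ++ t) := by
  induction q with
  | zero => rw [rep_zero]; exact ht
  | succ q ih =>
    rw [rep_succ]
    have := Chn.step hm ih
    simpa using this

theorem pre_prep {n i : ℕ} (h : i < n) {v : Fin n → Bool} {b : Bool} {k m : ℕ}
    {L L' : Language (Letter n)} {u u' : List (Letter n)} (hu : u ∈ L) (hu' : u' ∈ L')
    (huB : ∀ a ∈ u, a ∈ Bsub n i)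
    (huV : ∀ a ∈ u, a ∈ Val n i (Function.update v ⟨i, h⟩ b))
    (huV' : ∀ a ∈ u', a ∈ Val n i (Function.update v ⟨i, h⟩ b))
    (hp : PreK k m u u') :
    ∃ e e' : List (Letter n), e ∈ MB ⟨i, h⟩ L ∧ e' ∈ MB ⟨i, h⟩ L' ∧
      e ∈ TB i (lett ⟨i, h⟩ b) (lett ⟨i, h⟩ (!b)) ∧
      (∀ a ∈ e, a ∈ Val n (i + 1) v) ∧ (∀ a ∈ e', a ∈ Val n (i + 1) v) ∧
      Letter.dollar ∈ e ∧ PreK k m (Letter.hash ⟨i, h⟩ :: e) (Letter.hash ⟨i, h⟩ :: e') := by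
  have hc : lett ⟨i, h⟩ b = Letter.pos ⟨i, h⟩ ∨ lett ⟨i, h⟩ b = Letter.neg ⟨i, h⟩ := by
    cases b <;> simp [lett]
  have hcV : lett ⟨i, h⟩ b ∈ Val n (i + 1) v := lett_mem_Val b (Or.inl (Nat.lt_succ_self i))
  have hdV : Letter.dollar ∈ Val n (i + 1) v := Nat.succ_pos i
  have hall : ∀ w : List (Letter n), (∀ a ∈ w, a ∈ Val n i (Function.update v ⟨i, h⟩ b)) →
      ∀ a ∈ lett ⟨i, h⟩ b :: (w ++ [Letter.dollar, lett ⟨i, h⟩ b]), a ∈ Val n (i + 1) v := by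
    intro w hw a ha
    simp only [List.mem_cons, List.mem_append, List.not_mem_nil, or_false] at ha
    rcases ha with rfl | ha | rfl | rfl
    · exact hcV
    · exact (Val_up h (hw a ha)).1
    · exact hdV
    · exact hcV
  refine ⟨lett ⟨i, h⟩ b :: (u ++ [Letter.dollar, lett ⟨i, h⟩ b]),
    lett ⟨i, h⟩ b :: (u' ++ [Letter.dollar, lett ⟨i, h⟩ b]),
    mem_MB.2 ⟨_, u, _, hc, hu, hc, rfl⟩, mem_MB.2 ⟨_, u', _, hc, hu', hc, rfl⟩,
    mem_TB.2 ⟨u, fun a ha => ⟨huB a ha, (Val_up h (huV a ha)).2.1⟩, rfl⟩,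
    hall u huV, hall u' huV', by simp, ?_⟩
  exact (PreK.refl [Letter.hash ⟨i, h⟩, lett ⟨i, h⟩ b]).append (hp.append (PreK.refl _))

theorem pre_of_true {n : ℕ} {Q : ℕ → Bool} {φ : List (List (Fin n × Bool))} (k m : ℕ)
    (i : ℕ) (hi : i ≤ n) : ∀ v : Fin n → Bool, QTruth n Q φ i v →
      ∃ u ∈ (LL n Q φ i).1, ∃ u' ∈ (LL n Q φ i).2, (∀ a ∈ u, a ∈ Val n i v) ∧
        (∀ a ∈ u', a ∈ Val n i v) ∧ PreK k m u u' := by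
  induction i with
  | zero =>
    intro v hv
    obtain ⟨w, hw, hwV⟩ := prod_sat.2 hv
    exact ⟨w, (LL_letters (Q := Q) (φ := φ) 0 hi).2 w hw, w, hw, hwV, hwV, PreK.refl w⟩
  | succ i ih =>
    intro v hv
    have h : i < n := hi
    have ih := ih h.le
    rw [QTruth_succ h] at hv
    obtain ⟨hB1, hB2⟩ := LL_letters (Q := Q) (φ := φ) i h.le
    have hHV : Letter.hash ⟨i, h⟩ ∈ Val n (i + 1) v := Nat.lt_succ_self i
    have hDV : Letter.dollar ∈ Val n (i + 1) v := Nat.succ_pos i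
    obtain ⟨p, hp⟩ := PreK.pump (A := Letter n) k m
    have key : ∀ b, QTruth n Q φ i (Function.update v ⟨i, h⟩ b) →
        ∃ e e' : List (Letter n), e ∈ MB ⟨i, h⟩ (LL n Q φ i).1 ∧
          e' ∈ MB ⟨i, h⟩ (LL n Q φ i).2 ∧
          e ∈ TB i (lett ⟨i, h⟩ b) (lett ⟨i, h⟩ (!b)) ∧
          (∀ a ∈ e, a ∈ Val n (i + 1) v) ∧ (∀ a ∈ e', a ∈ Val n (i + 1) v) ∧
          PreK k m (Letter.hash ⟨i, h⟩ :: e) (Letter.hash ⟨i, h⟩ :: e') ∧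
          PreK k m (rep (Letter.hash ⟨i, h⟩ :: e) (p + p)) (rep (Letter.hash ⟨i, h⟩ :: e) p ++
            [Letter.hash ⟨i, h⟩, Letter.dollar] ++ rep (Letter.hash ⟨i, h⟩ :: e) p) := by
      intro b hb
      obtain ⟨u, hu, u', hu', h1, h2, h3⟩ := ih _ hb
      obtain ⟨e, e', a1, a2, a3, a4, a5, a6, a7⟩ :=
        pre_prep h hu hu' (hB1 u hu) h1 h2 h3
      refine ⟨e, e', a1, a2, a3, a4, a5, a7, hp _ _ ?_ _ _ _ (by omega) le_rfl le_rfl⟩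
      simp [a6]
    have hrep : ∀ e : List (Letter n), (∀ a ∈ e, a ∈ Val n (i + 1) v) → ∀ q,
        ∀ a ∈ rep (Letter.hash ⟨i, h⟩ :: e) q, a ∈ Val n (i + 1) v := by
      intro e he q a ha
      rcases List.mem_cons.1 (mem_rep ha) with rfl | ha
      · exact hHV
      · exact he a ha
    cases hQ : Q i with
    | true =>
      simp only [hQ, if_true] at hv
      obtain ⟨b, hb⟩ := hv
      obtain ⟨e, e', a1, a2, a3, a4, a5, a6, a7⟩ := key b hb
      have r := hrep e a4
      have r' := hrep e' a5
      refine ⟨rep (Letter.hash ⟨i, h⟩ :: e) (p + p) ++ [Letter.hash ⟨i, h⟩],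
        (mem_LL1 h).2 (Chn.rep a1 Chn.base _),
        (rep (Letter.hash ⟨i, h⟩ :: e') p ++ [Letter.hash ⟨i, h⟩]) ++ Letter.dollar ::
          (rep (Letter.hash ⟨i, h⟩ :: e) p ++ [Letter.hash ⟨i, h⟩]),
        (mem_LL2_ex h hQ).2 ⟨_, _, Chn.rep a2 Chn.base _, ?_, rfl⟩, ?_, ?_, ?_⟩
      · cases b
        · exact Or.inr (Chn.rep a3 Chn.base _)
        · exact Or.inl (Chn.rep a3 Chn.base _)
      · intro a ha
        simp only [List.mem_append, List.mem_singleton] at ha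
        rcases ha with ha | rfl
        · exact r _ a ha
        · exact hHV
      · intro a ha
        simp only [List.mem_append, List.mem_cons, List.not_mem_nil, or_false] at ha
        rcases ha with (ha | rfl) | rfl | ha | rfl
        · exact r' _ a ha
        · exact hHV
        · exact hDV
        · exact r _ a ha
        · exact hHV
      · have := (a7.append (PreK.refl [Letter.hash ⟨i, h⟩])).trans
          ((((a6.rep p).append (PreK.refl _)).append (PreK.refl _)).append (PreK.refl _))
        simpa using this
    | false =>
      simp only [hQ, if_false, Bool.false_eq_true] at hv
      obtain ⟨e, e', a1, a2, a3, a4, a5, a6, a7⟩ := key true (hv true)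
      obtain ⟨f, f', b1, b2, b3, b4, b5, b6, b7⟩ := key false (hv false)
      have r := hrep e a4
      have r' := hrep e' a5
      have s := hrep f b4
      have s' := hrep f' b5
      refine ⟨rep (Letter.hash ⟨i, h⟩ :: f) (p + p) ++ (rep (Letter.hash ⟨i, h⟩ :: e) (p + p) ++
          [Letter.hash ⟨i, h⟩]),
        (mem_LL1 h).2 (Chn.rep b1 (Chn.rep a1 Chn.base _) _),
        (rep (Letter.hash ⟨i, h⟩ :: f) p ++ [Letter.hash ⟨i, h⟩]) ++ Letter.dollar ::
          ((rep (Letter.hash ⟨i, h⟩ :: f') p ++ (rep (Letter.hash ⟨i, h⟩ :: e') p ++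
            [Letter.hash ⟨i, h⟩])) ++ Letter.dollar ::
          (rep (Letter.hash ⟨i, h⟩ :: e) p ++ [Letter.hash ⟨i, h⟩])),
        (mem_LL2_all h hQ).2 ⟨_, _, _, Chn.rep b3 Chn.base _,
          Chn.rep b2 (Chn.rep a2 Chn.base _) _, Chn.rep a3 Chn.base _, rfl⟩, ?_, ?_, ?_⟩
      · intro a ha
        simp only [List.mem_append, List.mem_singleton] at ha
        rcases ha with ha | ha | rfl
        · exact s _ a ha
        · exact r _ a ha
        · exact hHV
      · intro a ha
        simp only [List.mem_append, List.mem_cons, List.not_mem_nil, or_false] at ha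
        rcases ha with (ha | rfl) | rfl | (ha | ha | rfl) | rfl | ha | rfl
        · exact s _ a ha
        · exact hHV
        · exact hDV
        · exact s' _ a ha
        · exact r' _ a ha
        · exact hHV
        · exact hDV
        · exact r _ a ha
        · exact hHV
      · have h1 := b7.trans ((PreK.refl _).append (b6.rep p))
        have h2 := a7.trans (((a6.rep p).append (PreK.refl _)).append (PreK.refl _))
        have := h1.append (h2.append (PreK.refl [Letter.hash ⟨i, h⟩]))
        simpa using this

theorem Bsub_Val {n : ℕ} {v : Fin n → Bool} {a : Letter n} (h : a ∈ Bsub n n) :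
    a ∈ Val n n v := by
  cases a with
  | pos j => exact Or.inl j.2
  | neg j => exact Or.inl j.2
  | hash j => exact h
  | dollar => exact h

/-- `Ψ` is true (being closed, its truth does not depend on the auxiliary assignment)
if and only if `L_Ψ = Lₙ` is not `ST[3/2]`-separable from `L'_Ψ = L'ₙ` (level `3/2`
of the Straubing-Thérien hierarchy is index `3` in half units). -/
theorem statement16 (n : ℕ) (Q : ℕ → Bool) (φ : List (List (Fin n × Bool))) :
    (∀ v : Fin n → Bool, QTruth n Q φ n v) ↔
      ¬ Separable (hlevel STbasis 3 (Letter n)) (LL n Q φ n).1 (LL n Q φ n).2 := by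
  constructor
  · rintro hT ⟨K, hK, h1, h2⟩
    rw [hlevel_three] at hK
    obtain ⟨k, m, hkm⟩ := three_basis hK
    obtain ⟨u, hu, u', hu', -, -, hp⟩ := pre_of_true (Q := Q) (φ := φ) k m n le_rfl
      (fun _ => true) (hT _)
    have hmem : u' ∈ (LL n Q φ n).2 ⊓ K := ⟨hu', hkm u u' hp (h1 hu)⟩
    rw [h2] at hmem
    exact hmem
  · intro hS v
    by_contra hv
    obtain ⟨K, hP, -, h2, h3⟩ := sep_of_false n le_rfl v hv
    refine hS ⟨K, hP.hlevel, fun w hw => h2 w hw fun a ha =>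
      Bsub_Val ((LL_letters (Q := Q) (φ := φ) n le_rfl).1 w hw a ha), ?_⟩
    ext w
    exact ⟨fun hw => absurd hw.2 (h3 w hw.1), fun hw => hw.elim⟩
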